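/- Let N = 4n + m with n ≥ 1 an integer and m ∈ {0,1,2,3}, and let 0 < s < 1 (so that 2s < N). Then there exist at least n functions u_1, …, u_n ∈ Ḣ^s(ℝ^N), pairwise distinct (u_i and u_j do not agree almost everywhere for i ≠ j), such that each u_j is: (i) a weak solution of the fractional critical Schrödinger equation (−Δ)^s u = |u|^{2*_s−2}u on ℝ^N, i.e. ⟨E'(u_j), v⟩ = 0 for every v ∈ Ḣ^s(ℝ^N) (with Ω = ℝ^N in the pairing); (ii) sign-changing, i.e. both {x : u_j(x) > 0} and {x : u_j(x) < 0} have positive Lebesgue measure; and (iii) non-radial, i.e. there is no function f : [0,∞) → ℝ with u_j(x) = f(|x|) for almost every x ∈ ℝ^N. -/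

import Mathlib

open MeasureTheory Real

noncomputable section

abbrev Euc (N : ℕ) := EuclideanSpace ℝ (Fin N)

/-- The critical exponent `2*_s = 2N/(N-2s)`. -/
def twoStar (N : ℕ) (s : ℝ) : ℝ := 2 * N / (N - 2 * s)

/-- Square of the Gagliardo seminorm `‖u‖²`. -/
def gagSq (N : ℕ) (s : ℝ) (u : Euc N → ℝ) : ℝ :=
  ∫ p : Euc N × Euc N, (u p.1 - u p.2) ^ 2 / dist p.1 p.2 ^ ((N : ℝ) + 2 * s)

/-- The Gagliardo seminorm `‖u‖`. -/
def gagNorm (N : ℕ) (s : ℝ) (u : Euc N → ℝ) : ℝ := Real.sqrt (gagSq N s u)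

/-- Finiteness of the Gagliardo seminorm (`‖u‖ < ∞`). -/
def GagFinite (N : ℕ) (s : ℝ) (u : Euc N → ℝ) : Prop :=
  Integrable (fun p : Euc N × Euc N => (u p.1 - u p.2) ^ 2 / dist p.1 p.2 ^ ((N : ℝ) + 2 * s))

/-- Membership in `Ḣ^s(Ω)`: measurable, in `L^{2*_s}(ℝ^N)`, finite Gagliardo seminorm,
and vanishing a.e. outside `Ω`. -/
structure MemHs (N : ℕ) (s : ℝ) (Ω : Set (Euc N)) (u : Euc N → ℝ) : Prop where
  meas : Measurable u
  lp : Integrable fun x : Euc N => |u x| ^ twoStar N s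
  fin : GagFinite N s u
  vanish : ∀ᵐ x : Euc N, x ∉ Ω → u x = 0

/-- The energy functional `E(u;Ω)`. -/
def energy (N : ℕ) (s : ℝ) (Ω : Set (Euc N)) (u : Euc N → ℝ) : ℝ :=
  (1 / 2) * gagSq N s u - (1 / twoStar N s) * ∫ x in Ω, |u x| ^ twoStar N s

/-- The Nehari functional `N(u;Ω)`. -/
def nehariFun (N : ℕ) (s : ℝ) (Ω : Set (Euc N)) (u : Euc N → ℝ) : ℝ :=
  gagSq N s u - ∫ x in Ω, |u x| ^ twoStar N s

/-- The pairing `⟨E'(u), v⟩` (with domain `Ω`). -/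
def pairing (N : ℕ) (s : ℝ) (Ω : Set (Euc N)) (u v : Euc N → ℝ) : ℝ :=
  (∫ p : Euc N × Euc N, (u p.1 - u p.2) * (v p.1 - v p.2) / dist p.1 p.2 ^ ((N : ℝ) + 2 * s))
    - ∫ x in Ω, |u x| ^ (twoStar N s - 2) * u x * v x

/-- The sharp fractional Sobolev constant `S(N,s)`. -/
def sobolevS (N : ℕ) (s : ℝ) : ℝ :=
  (2 : ℝ) ^ (-(2 * s)) * Real.pi ^ (-s) *
    (Real.Gamma ((N - 2 * s) / 2) / Real.Gamma ((N + 2 * s) / 2)) *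
    (Real.Gamma N / Real.Gamma (N / 2)) ^ (2 * s / N)

namespace FracSobolev

open Filter Topology

section

/-- The admissible range of the exponents, `0 < s` and `2s < N`. -/
structure Subcritical (N : ℕ) (s : ℝ) : Prop where
  pos : 0 < s
  lt : 2 * s < N

variable {N : ℕ} {s : ℝ}

namespace Subcritical

lemma dim_pos (h : Subcritical N s) : 0 < (N : ℝ) := by linarith [h.pos, h.lt]

lemma sub_pos (h : Subcritical N s) : 0 < (N : ℝ) - 2 * s := by linarith [h.lt]

lemma two_lt (h : Subcritical N s) : 2 < twoStar N s := by
  unfold twoStar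
  rw [lt_div_iff₀ h.sub_pos]
  linarith [h.pos]

lemma twoStar_pos (h : Subcritical N s) : 0 < twoStar N s := by linarith [h.two_lt]

lemma half_mul_twoStar (h : Subcritical N s) : ((N : ℝ) - 2 * s) / 2 * twoStar N s = N := by
  unfold twoStar
  have := h.sub_pos
  field_simp

end Subcritical

/-- Membership in `Ḣ^s(ℝ^N)`. -/
abbrev Hs (N : ℕ) (s : ℝ) (u : Euc N → ℝ) : Prop := MemHs N s Set.univ u

/-- The critical Lebesgue integral `∫ |u|^{2*}`. -/
def critInt (N : ℕ) (s : ℝ) (u : Euc N → ℝ) : ℝ := ∫ x, |u x| ^ twoStar N s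

/-- The bilinear form attached to the Gagliardo seminorm. -/
def gagInner (N : ℕ) (s : ℝ) (u v : Euc N → ℝ) : ℝ :=
  ∫ p : Euc N × Euc N, (u p.1 - u p.2) * (v p.1 - v p.2) / dist p.1 p.2 ^ ((N : ℝ) + 2 * s)

/-- The derivative of `critInt / 2*` at `u` in the direction `v`. -/
def critPair (N : ℕ) (s : ℝ) (u v : Euc N → ℝ) : ℝ :=
  ∫ x, |u x| ^ (twoStar N s - 2) * u x * v x

/-- The square root of the Gagliardo integrand, with its sign. -/
def diffQuot (N : ℕ) (s : ℝ) (u : Euc N → ℝ) (p : Euc N × Euc N) : ℝ :=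
  (u p.1 - u p.2) * dist p.1 p.2 ^ (-(((N : ℝ) + 2 * s) / 2))

lemma pairing_eq (u v : Euc N → ℝ) :
    pairing N s Set.univ u v = gagInner N s u v - critPair N s u v := by
  simp [pairing, gagInner, critPair]

lemma diffQuot_mul (u v : Euc N → ℝ) (p : Euc N × Euc N) :
    diffQuot N s u p * diffQuot N s v p =
      (u p.1 - u p.2) * (v p.1 - v p.2) / dist p.1 p.2 ^ ((N : ℝ) + 2 * s) := by
  by_cases hp : p.1 = p.2
  · simp [diffQuot, hp]
  · have hd : 0 < dist p.1 p.2 := dist_pos.2 hp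
    have : (dist p.1 p.2 ^ ((N : ℝ) + 2 * s))⁻¹ =
        dist p.1 p.2 ^ (-(((N : ℝ) + 2 * s) / 2)) * dist p.1 p.2 ^ (-(((N : ℝ) + 2 * s) / 2)) := by
      rw [← rpow_add hd, ← rpow_neg hd.le]; ring_nf
    rw [div_eq_mul_inv, this]; unfold diffQuot; ring

lemma diffQuot_sq (u : Euc N → ℝ) (p : Euc N × Euc N) :
    diffQuot N s u p ^ 2 = (u p.1 - u p.2) ^ 2 / dist p.1 p.2 ^ ((N : ℝ) + 2 * s) := by
  rw [sq, diffQuot_mul, sq]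

lemma gagInner_eq (u v : Euc N → ℝ) :
    gagInner N s u v = ∫ p, diffQuot N s u p * diffQuot N s v p := by
  simp only [diffQuot_mul, gagInner]

lemma gagSq_eq (u : Euc N → ℝ) : gagSq N s u = ∫ p, diffQuot N s u p ^ 2 := by
  simp only [diffQuot_sq, gagSq]

lemma gagInner_self (u : Euc N → ℝ) : gagInner N s u u = gagSq N s u := by
  simp only [gagInner_eq, gagSq_eq, sq]

lemma gagSq_nonneg (u : Euc N → ℝ) : 0 ≤ gagSq N s u := by
  rw [gagSq_eq]; exact integral_nonneg fun _ => sq_nonneg _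

lemma critInt_nonneg (u : Euc N → ℝ) : 0 ≤ critInt N s u :=
  integral_nonneg fun _ => by positivity

lemma gagInner_comm (u v : Euc N → ℝ) : gagInner N s u v = gagInner N s v u := by
  simp only [gagInner_eq, mul_comm]

lemma measurable_diffQuot {u : Euc N → ℝ} (hu : Measurable u) : Measurable (diffQuot N s u) := by
  unfold diffQuot; fun_prop

lemma gagFinite_iff {u : Euc N → ℝ} (hu : Measurable u) :
    GagFinite N s u ↔ MemLp (diffQuot N s u) 2 := by
  rw [memLp_two_iff_integrable_sq (measurable_diffQuot hu).aestronglyMeasurable]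
  simp only [diffQuot_sq, GagFinite]

lemma integrable_rpow_iff (h : Subcritical N s) {u : Euc N → ℝ} (hu : Measurable u) :
    Integrable (fun x => |u x| ^ twoStar N s) ↔ MemLp u (ENNReal.ofReal (twoStar N s)) := by
  rw [← integrable_norm_rpow_iff hu.aestronglyMeasurable
    (by simpa using h.twoStar_pos) ENNReal.ofReal_ne_top, ENNReal.toReal_ofReal h.twoStar_pos.le]
  rfl

lemma hs_iff (h : Subcritical N s) {u : Euc N → ℝ} :
    Hs N s u ↔ Measurable u ∧ MemLp u (ENNReal.ofReal (twoStar N s)) ∧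
      MemLp (diffQuot N s u) 2 := by
  constructor
  · intro hu
    exact ⟨hu.meas, (integrable_rpow_iff h hu.meas).1 hu.lp, (gagFinite_iff hu.meas).1 hu.fin⟩
  · rintro ⟨h1, h2, h3⟩
    exact ⟨h1, (integrable_rpow_iff h h1).2 h2, (gagFinite_iff h1).2 h3, by simp⟩

lemma _root_.MemHs.memLp (h : Subcritical N s) {u : Euc N → ℝ} (hu : Hs N s u) :
    MemLp u (ENNReal.ofReal (twoStar N s)) := ((hs_iff h).1 hu).2.1

lemma _root_.MemHs.memLp_diffQuot {u : Euc N → ℝ} (hu : Hs N s u) :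
    MemLp (diffQuot N s u) 2 := (gagFinite_iff hu.meas).1 hu.fin

lemma diffQuot_add (u v : Euc N → ℝ) :
    diffQuot N s (u + v) = diffQuot N s u + diffQuot N s v := by
  ext p; simp [diffQuot]; ring

lemma diffQuot_smul (c : ℝ) (u : Euc N → ℝ) :
    diffQuot N s (c • u) = c • diffQuot N s u := by
  ext p; simp [diffQuot]; ring

lemma _root_.MemHs.add (h : Subcritical N s) {u v : Euc N → ℝ} (hu : Hs N s u) (hv : Hs N s v) :
    Hs N s (u + v) := by
  rw [hs_iff h] at *
  refine ⟨hu.1.add hv.1, hu.2.1.add hv.2.1, ?_⟩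
  rw [diffQuot_add]; exact hu.2.2.add hv.2.2

lemma _root_.MemHs.smul (h : Subcritical N s) (c : ℝ) {u : Euc N → ℝ} (hu : Hs N s u) :
    Hs N s (c • u) := by
  rw [hs_iff h] at *
  refine ⟨hu.1.const_smul c, hu.2.1.const_smul c, ?_⟩
  rw [diffQuot_smul]; exact hu.2.2.const_smul c

lemma _root_.MemHs.sub (h : Subcritical N s) {u v : Euc N → ℝ} (hu : Hs N s u) (hv : Hs N s v) :
    Hs N s (u - v) := by
  have := hu.add h (hv.smul h (-1))
  rwa [neg_one_smul, ← sub_eq_add_neg] at this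

lemma integrable_diffQuot_mul {u v : Euc N → ℝ} (hu : Hs N s u) (hv : Hs N s v) :
    Integrable fun p => diffQuot N s u p * diffQuot N s v p :=
  hu.memLp_diffQuot.integrable_mul hv.memLp_diffQuot

lemma gagInner_add_left {u v w : Euc N → ℝ} (hu : Hs N s u) (hv : Hs N s v) (hw : Hs N s w) :
    gagInner N s (u + v) w = gagInner N s u w + gagInner N s v w := by
  simp only [gagInner_eq, diffQuot_add, Pi.add_apply, add_mul]
  exact integral_add (integrable_diffQuot_mul hu hw) (integrable_diffQuot_mul hv hw)

lemma gagInner_smul_left (c : ℝ) (u w : Euc N → ℝ) :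
    gagInner N s (c • u) w = c * gagInner N s u w := by
  simp only [gagInner_eq, diffQuot_smul, Pi.smul_apply, smul_eq_mul, mul_assoc]
  exact integral_const_mul _ _

lemma gagInner_sub_left (h : Subcritical N s) {u v w : Euc N → ℝ} (hu : Hs N s u) (hv : Hs N s v)
    (hw : Hs N s w) :
    gagInner N s (u - v) w = gagInner N s u w - gagInner N s v w := by
  have : u - v = u + (-1 : ℝ) • v := by rw [neg_one_smul, ← sub_eq_add_neg]
  rw [this, gagInner_add_left hu (hv.smul h _) hw, gagInner_smul_left]
  ring

lemma gagSq_smul (c : ℝ) (u : Euc N → ℝ) : gagSq N s (c • u) = c ^ 2 * gagSq N s u := by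
  rw [← gagInner_self, gagInner_smul_left, gagInner_comm, gagInner_smul_left, gagInner_self]; ring

lemma gagSq_add {u v : Euc N → ℝ} (h : Subcritical N s) (hu : Hs N s u) (hv : Hs N s v) :
    gagSq N s (u + v) = gagSq N s u + 2 * gagInner N s u v + gagSq N s v := by
  have huv := hu.add h hv
  rw [← gagInner_self, gagInner_add_left hu hv huv, gagInner_comm u, gagInner_comm v,
    gagInner_add_left hu hv hu, gagInner_add_left hu hv hv, gagInner_comm v u, gagInner_self,
    gagInner_self]
  ring

lemma gagSq_sub_le (h : Subcritical N s) {u v : Euc N → ℝ} (hu : Hs N s u) (hv : Hs N s v) :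
    gagSq N s (u - v) ≤ 2 * gagSq N s u + 2 * gagSq N s v := by
  have h1 := gagSq_add h hu hv
  have h2 := gagSq_add h hu (hv.smul h (-1))
  rw [neg_one_smul, ← sub_eq_add_neg, gagInner_comm, ← neg_one_smul ℝ v, gagInner_smul_left,
    gagSq_smul, gagInner_comm] at h2
  have := gagSq_nonneg (N := N) (s := s) (u + v)
  linarith

lemma critInt_smul (c : ℝ) (u : Euc N → ℝ) :
    critInt N s (c • u) = |c| ^ twoStar N s * critInt N s u := by
  unfold critInt
  rw [← integral_const_mul]
  congr 1; ext x
  rw [Pi.smul_apply, smul_eq_mul, abs_mul, mul_rpow (abs_nonneg _) (abs_nonneg _)]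

lemma diffQuot_congr {u v : Euc N → ℝ} (huv : u =ᵐ[volume] v) :
    diffQuot N s u =ᵐ[volume] diffQuot N s v := by
  have h1 : ∀ᵐ p : Euc N × Euc N, u p.1 = v p.1 :=
    Measure.quasiMeasurePreserving_fst.ae huv
  have h2 : ∀ᵐ p : Euc N × Euc N, u p.2 = v p.2 :=
    Measure.quasiMeasurePreserving_snd.ae huv
  filter_upwards [h1, h2] with p h1 h2
  simp [diffQuot, h1, h2]

end

section

variable {N : ℕ} {s : ℝ}

/-- The volume of the unit ball. -/
def ballVol (N : ℕ) : ℝ := volume.real (Metric.ball (0 : Euc N) 1)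

lemma ballVol_pos : 0 < ballVol N :=
  ENNReal.toReal_pos (Metric.measure_ball_pos _ _ one_pos).ne' measure_ball_lt_top.ne

lemma volume_real_ball (x : Euc N) {r : ℝ} (hr : 0 < r) :
    volume.real (Metric.ball x r) = r ^ N * ballVol N := by
  rw [measureReal_def, Measure.addHaar_ball_of_pos _ _ hr, ENNReal.toReal_mul,
    ENNReal.toReal_ofReal (by positivity), finrank_euclideanSpace_fin]
  rfl

/-- The mean value of `u` on the ball of centre `x` and radius `r`. -/
def ballAvg (u : Euc N → ℝ) (x : Euc N) (r : ℝ) : ℝ := ⨍ y in Metric.ball x r, u y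

lemma ballAvg_eq (u : Euc N → ℝ) (x : Euc N) {r : ℝ} (hr : 0 < r) :
    ballAvg u x r = (r ^ N * ballVol N)⁻¹ * ∫ y in Metric.ball x r, u y := by
  rw [ballAvg, setAverage_eq, volume_real_ball x hr, smul_eq_mul]

lemma _root_.MemHs.integrableOn_ball (h : Subcritical N s) {u : Euc N → ℝ} (hu : Hs N s u)
    (x : Euc N) (r : ℝ) : IntegrableOn u (Metric.ball x r) := by
  have h1 : LocallyIntegrable u volume := (hu.memLp h).locallyIntegrable (by
    rw [← ENNReal.ofReal_one]; exact ENNReal.ofReal_le_ofReal (by linarith [h.two_lt]))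
  exact (h1.integrableOn_isCompact (isCompact_closedBall x r)).mono_set Metric.ball_subset_closedBall

/-- The density `∫ |u(x)-u(y)|²/|x-y|^{N+2s} dy` of the squared Gagliardo seminorm. -/
def gagDens (N : ℕ) (s : ℝ) (u : Euc N → ℝ) (x : Euc N) : ℝ := ∫ y, diffQuot N s u (x, y) ^ 2

lemma gagDens_nonneg (u : Euc N → ℝ) (x : Euc N) : 0 ≤ gagDens N s u x :=
  integral_nonneg fun _ => sq_nonneg _

lemma _root_.MemHs.integrable_diffQuot_sq {u : Euc N → ℝ} (hu : Hs N s u) :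
    Integrable fun p => diffQuot N s u p ^ 2 := hu.memLp_diffQuot.integrable_sq

lemma integrable_gagDens {u : Euc N → ℝ} (hu : Hs N s u) : Integrable (gagDens N s u) :=
  hu.integrable_diffQuot_sq.integral_prod_left

lemma integral_gagDens {u : Euc N → ℝ} (hu : Hs N s u) : ∫ x, gagDens N s u x = gagSq N s u := by
  rw [gagSq_eq]; exact (integral_prod _ hu.integrable_diffQuot_sq).symm

lemma ae_integrable_slice {u : Euc N → ℝ} (hu : Hs N s u) :
    ∀ᵐ x, Integrable fun y => diffQuot N s u (x, y) ^ 2 :=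
  Integrable.prod_right_ae hu.integrable_diffQuot_sq

lemma measure_ball_ne_zero (x : Euc N) {r : ℝ} (hr : 0 < r) : volume (Metric.ball x r) ≠ 0 :=
  (Metric.measure_ball_pos _ _ hr).ne'

lemma sq_sub_le_of_dist_lt (h : Subcritical N s) (u : Euc N → ℝ) {x y : Euc N} {r : ℝ}
    (hxy : dist y x < r) :
    (u x - u y) ^ 2 ≤ r ^ N * r ^ (2 * s) * diffQuot N s u (x, y) ^ 2 := by
  rcases eq_or_ne x y with rfl | hne
  · simp [diffQuot]
  have hd : 0 < dist x y := dist_pos.2 hne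
  have hr : 0 < r := by rw [dist_comm] at hxy; linarith
  rw [diffQuot_sq, ← rpow_natCast r N, ← rpow_add hr]
  rw [mul_div_assoc', le_div_iff₀ (by positivity), mul_comm]
  gcongr
  · linarith [h.dim_pos, h.pos]
  · rw [dist_comm]; exact hxy.le

lemma sq_sub_ballAvg_le (h : Subcritical N s) {u : Euc N → ℝ} (hu : Hs N s u) {x : Euc N}
    (hx : Integrable fun y => diffQuot N s u (x, y) ^ 2) {r : ℝ} (hr : 0 < r) :
    (u x - ballAvg u x r) ^ 2 ≤ (ballVol N)⁻¹ * r ^ (2 * s) * gagDens N s u x := by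
  have hint := hu.integrableOn_ball h x r
  have hconst : IntegrableOn (fun _ : Euc N => u x) (Metric.ball x r) :=
    integrableOn_const measure_ball_lt_top.ne
  have hω := ballVol_pos (N := N)
  have hbound : ∀ y ∈ Metric.ball x r,
      (u x - u y) ^ 2 ≤ r ^ N * r ^ (2 * s) * diffQuot N s u (x, y) ^ 2 := fun y hy =>
    sq_sub_le_of_dist_lt h u hy
  have hsq : IntegrableOn (fun y => (u x - u y) ^ 2) (Metric.ball x r) := by
    refine Integrable.mono' (hx.const_mul (r ^ N * r ^ (2 * s))).integrableOn ?_ ?_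
    · have := hu.meas; fun_prop
    · filter_upwards [ae_restrict_mem measurableSet_ball] with y hy
      rw [norm_of_nonneg (sq_nonneg _)]; exact hbound y hy
  have havg : u x - ballAvg u x r = ⨍ y in Metric.ball x r, (u x - u y) := by
    rw [setAverage_eq, integral_sub hconst hint, setIntegral_const, ballAvg, setAverage_eq,
      smul_sub, smul_smul, inv_mul_cancel₀, one_smul]
    rw [volume_real_ball x hr]; positivity
  have hj := ConvexOn.map_set_average_le (μ := volume) (t := Metric.ball x r)
    (f := fun y => u x - u y) (even_two.convexOn_pow :
      ConvexOn ℝ Set.univ fun t : ℝ => t ^ 2)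
    (by fun_prop) isClosed_univ (measure_ball_ne_zero x hr) measure_ball_lt_top.ne (by simp)
    (hconst.sub hint) hsq
  rw [havg]
  refine hj.trans ?_
  rw [setAverage_eq, volume_real_ball x hr, smul_eq_mul]
  have h1 : ∫ y in Metric.ball x r, (u x - u y) ^ 2 ≤ r ^ N * r ^ (2 * s) * gagDens N s u x := by
    calc _ ≤ ∫ y in Metric.ball x r, r ^ N * r ^ (2 * s) * diffQuot N s u (x, y) ^ 2 :=
          setIntegral_mono_on hsq (hx.const_mul _).integrableOn measurableSet_ball hbound
      _ ≤ ∫ y, r ^ N * r ^ (2 * s) * diffQuot N s u (x, y) ^ 2 :=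
          setIntegral_le_integral (hx.const_mul _) (ae_of_all _ fun y => by positivity)
      _ = _ := integral_const_mul _ _
  calc _ ≤ (r ^ N * ballVol N)⁻¹ * (r ^ N * r ^ (2 * s) * gagDens N s u x) := by gcongr
    _ = _ := by field_simp

lemma abs_ballAvg_rpow_le (h : Subcritical N s) {u : Euc N → ℝ} (hu : Hs N s u) (x : Euc N)
    {r q : ℝ} (hr : 0 < r) (hq : 1 ≤ q)
    (hi : IntegrableOn (fun y => |u y| ^ q) (Metric.ball x r)) :
    |ballAvg u x r| ^ q ≤ (r ^ N * ballVol N)⁻¹ * ∫ y in Metric.ball x r, |u y| ^ q := by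
  have hint := hu.integrableOn_ball h x r
  have hω := ballVol_pos (N := N)
  have hj := ConvexOn.map_set_average_le (μ := volume) (t := Metric.ball x r)
    (f := fun y => |u y|) (convexOn_rpow hq)
    (continuousOn_id.rpow_const fun _ _ => Or.inr (by linarith)) isClosed_Ici
    (measure_ball_ne_zero x hr) measure_ball_lt_top.ne (ae_of_all _ fun y => Set.mem_Ici.2 (abs_nonneg _))
    hint.abs hi
  rw [setAverage_eq _ (fun y => |u y| ^ q), volume_real_ball x hr, smul_eq_mul] at hj
  refine le_trans ?_ hj
  refine rpow_le_rpow (abs_nonneg _) ?_ (by linarith)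
  rw [ballAvg, setAverage_eq, setAverage_eq, smul_eq_mul, smul_eq_mul, abs_mul,
    abs_of_nonneg (by positivity)]
  gcongr
  exact abs_integral_le_integral_abs

lemma ballAvg_mass_le (h : Subcritical N s) {u : Euc N → ℝ} (hu : Hs N s u) (x : Euc N)
    {r : ℝ} (hr : 0 < r) :
    ballVol N * (r ^ (((N : ℝ) - 2 * s) / 2) * |ballAvg u x r|) ^ twoStar N s ≤
      ∫ y in Metric.ball x r, |u y| ^ twoStar N s := by
  have := abs_ballAvg_rpow_le h hu x hr (by linarith [h.two_lt]) hu.lp.integrableOn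
  have hω := ballVol_pos (N := N)
  rw [mul_rpow (by positivity) (by positivity), ← rpow_mul hr.le, h.half_mul_twoStar, rpow_natCast]
  rw [inv_mul_eq_div, le_div_iff₀ (by positivity)] at this
  linarith

/-- The improved Sobolev inequality: a bound on the scale-invariant mean values upgrades to a bound
on the critical Lebesgue integral. -/
theorem critInt_le_of_ballAvg_le (h : Subcritical N s) {u : Euc N → ℝ} (hu : Hs N s u) {M : ℝ}
    (hM : 0 < M)
    (hav : ∀ x r, 0 < r → r ^ (((N : ℝ) - 2 * s) / 2) * |ballAvg u x r| ≤ M) :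
    critInt N s u ≤ 4 * (ballVol N)⁻¹ * (2 * M) ^ (twoStar N s - 2) * gagSq N s u := by
  have hω := ballVol_pos (N := N)
  have hp := h.two_lt
  have hα : 0 < ((N : ℝ) - 2 * s) / 2 := by linarith [h.sub_pos]
  rw [critInt, ← integral_gagDens hu, ← integral_const_mul]
  refine integral_mono_ae hu.lp ((integrable_gagDens hu).const_mul _) ?_
  filter_upwards [ae_integrable_slice hu] with x hx
  have hD := gagDens_nonneg (N := N) (s := s) u x
  rcases eq_or_ne (u x) 0 with h0 | h0
  · simp only [h0, abs_zero]
    rw [zero_rpow (by linarith)]; positivity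
  have ha : 0 < |u x| := abs_pos.2 h0
  set r : ℝ := (2 * M / |u x|) ^ (((N : ℝ) - 2 * s) / 2)⁻¹ with hr_def
  have hr : 0 < r := by positivity
  have hrα : r ^ (((N : ℝ) - 2 * s) / 2) = 2 * M / |u x| := by
    rw [hr_def, ← rpow_mul (by positivity), inv_mul_cancel₀ hα.ne', rpow_one]
  have hr2 : r ^ (2 * s) = (2 * M / |u x|) ^ (twoStar N s - 2) := by
    rw [hr_def, ← rpow_mul (by positivity)]
    congr 1
    have := h.sub_pos
    unfold twoStar; field_simp; ring
  have h1 := hav x r hr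
  rw [hrα] at h1
  have h2 : |ballAvg u x r| ≤ |u x| / 2 := by
    rw [div_mul_eq_mul_div, div_le_iff₀ ha] at h1
    nlinarith
  have h3 : |u x| / 2 ≤ |u x - ballAvg u x r| := by
    have := abs_sub_abs_le_abs_sub (u x) (ballAvg u x r); linarith
  have h4 := sq_sub_ballAvg_le h hu hx hr
  have h5 : (|u x| / 2) ^ 2 ≤ (u x - ballAvg u x r) ^ 2 := by
    rw [← sq_abs (u x - _)]; gcongr
  have h6 := h5.trans h4
  rw [hr2, div_rpow (by positivity) ha.le] at h6
  have h7 : |u x| ^ twoStar N s = |u x| ^ 2 * |u x| ^ (twoStar N s - 2) := by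
    rw [← rpow_natCast (|u x|) 2, ← rpow_add ha]; congr 1; push_cast; ring
  rw [h7]
  have hpos : 0 < |u x| ^ (twoStar N s - 2) := by positivity
  calc |u x| ^ 2 * |u x| ^ (twoStar N s - 2)
      = 4 * ((|u x| / 2) ^ 2) * |u x| ^ (twoStar N s - 2) := by ring
    _ ≤ 4 * ((ballVol N)⁻¹ * ((2 * M) ^ (twoStar N s - 2) / |u x| ^ (twoStar N s - 2)) *
          gagDens N s u x) * |u x| ^ (twoStar N s - 2) := by gcongr
    _ = _ := by field_simp

/-- The fractional Sobolev inequality. -/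
theorem exists_sobolev (h : Subcritical N s) :
    ∃ C, 0 < C ∧ ∀ u, Hs N s u → critInt N s u ≤ C * gagSq N s u ^ (twoStar N s / 2) := by
  have hω := ballVol_pos (N := N)
  have hp := h.two_lt
  set p := twoStar N s
  set K : ℝ := 4 * (ballVol N)⁻¹ * 2 ^ (p - 2) * ((ballVol N)⁻¹) ^ ((p - 2) / p)
  have hK : 0 < K := by positivity
  refine ⟨K ^ (p / 2), by positivity, fun u hu => ?_⟩
  have hG := gagSq_nonneg (N := N) (s := s) u
  rcases (critInt_nonneg (N := N) (s := s) u).eq_or_lt with h0 | h0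
  · rw [← h0]; positivity
  set X := critInt N s u
  have hM : 0 < (X * (ballVol N)⁻¹) ^ p⁻¹ := by positivity
  have hav : ∀ x r, 0 < r →
      r ^ (((N : ℝ) - 2 * s) / 2) * |ballAvg u x r| ≤ (X * (ballVol N)⁻¹) ^ p⁻¹ := by
    intro x r hr
    have h1 := (ballAvg_mass_le h hu x hr).trans
      (setIntegral_le_integral hu.lp (ae_of_all _ fun y => by positivity))
    rw [le_rpow_inv_iff_of_pos (by positivity) (by positivity) (by linarith),
      ← div_eq_mul_inv, le_div_iff₀ hω, mul_comm]
    exact h1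
  have h1 := critInt_le_of_ballAvg_le h hu hM hav
  have h2 : (2 * (X * (ballVol N)⁻¹) ^ p⁻¹) ^ (p - 2) =
      2 ^ (p - 2) * ((ballVol N)⁻¹) ^ ((p - 2) / p) * X ^ ((p - 2) / p) := by
    rw [mul_rpow (by positivity) (by positivity), ← rpow_mul (by positivity),
      mul_rpow (by positivity) (by positivity), inv_mul_eq_div]
    ring
  have h3 : X ≤ K * X ^ ((p - 2) / p) * gagSq N s u := by
    refine h1.trans_eq ?_
    rw [h2]; ring
  have h4 : X ^ (2 / p) ≤ K * gagSq N s u := by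
    have hX : X = X ^ (2 / p) * X ^ ((p - 2) / p) := by
      rw [← rpow_add h0, ← add_div, add_sub_cancel, div_self (by linarith), rpow_one]
    have hX' : 0 < X ^ ((p - 2) / p) := by positivity
    nth_rewrite 1 [hX] at h3
    refine le_of_mul_le_mul_right ?_ hX'
    linarith
  have h5 := rpow_le_rpow (by positivity) h4 (show 0 ≤ p / 2 by linarith)
  rwa [← rpow_mul h0.le, mul_rpow hK.le hG, div_mul_div_comm, mul_comm p 2, div_self (by linarith),
    rpow_one] at h5

end

section

variable {N : ℕ} {s : ℝ}

lemma hs_zero (h : Subcritical N s) : Hs N s 0 := by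
  refine (hs_iff h).2 ⟨measurable_zero, MemLp.zero, ?_⟩
  have : diffQuot N s 0 = 0 := by ext p; simp [diffQuot]
  rw [this]; exact MemLp.zero

lemma ae_eq_zero_of_critInt_eq_zero (h : Subcritical N s) {u : Euc N → ℝ} (hu : Hs N s u)
    (h0 : critInt N s u = 0) : u =ᵐ[volume] 0 := by
  have := (integral_eq_zero_iff_of_nonneg (fun x => by positivity) hu.lp).1 h0
  filter_upwards [this] with x hx
  simpa using (rpow_eq_zero (abs_nonneg _) h.twoStar_pos.ne').1 hx

lemma critInt_eq_zero_of_gagSq_eq_zero (h : Subcritical N s) {u : Euc N → ℝ} (hu : Hs N s u)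
    (h0 : gagSq N s u = 0) : critInt N s u = 0 := by
  obtain ⟨C, -, hC⟩ := exists_sobolev h
  refine le_antisymm ((hC u hu).trans_eq ?_) (critInt_nonneg _)
  rw [h0, zero_rpow (by linarith [h.twoStar_pos]), mul_zero]

lemma ae_eq_zero_of_gagSq_eq_zero (h : Subcritical N s) {u : Euc N → ℝ} (hu : Hs N s u)
    (h0 : gagSq N s u = 0) : u =ᵐ[volume] 0 :=
  ae_eq_zero_of_critInt_eq_zero h hu (critInt_eq_zero_of_gagSq_eq_zero h hu h0)

lemma ae_eq_of_gagInner_eq (h : Subcritical N s) {u v : Euc N → ℝ} (hu : Hs N s u) (hv : Hs N s v)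
    (huv : gagInner N s u (u - v) = gagInner N s v (u - v)) : u =ᵐ[volume] v := by
  have h1 := ae_eq_zero_of_gagSq_eq_zero h (hu.sub h hv) (by
    rw [← gagInner_self, gagInner_sub_left h hu hv (hu.sub h hv), huv, sub_self])
  filter_upwards [h1] with x hx
  exact sub_eq_zero.1 hx

lemma eLpNorm_critical (h : Subcritical N s) {u : Euc N → ℝ} (hu : Hs N s u) :
    (eLpNorm u (ENNReal.ofReal (twoStar N s)) volume).toReal =
      critInt N s u ^ (twoStar N s)⁻¹ := by
  rw [(hu.memLp h).eLpNorm_eq_integral_rpow_norm (by simpa using h.twoStar_pos)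
    ENNReal.ofReal_ne_top, ENNReal.toReal_ofReal h.twoStar_pos.le, ENNReal.toReal_ofReal]
  · rfl
  · positivity

/-- `Ḣ^s(ℝ^N)` realised as a space of square integrable functions on `ℝ^N × ℝ^N`. -/
def hsSpace (h : Subcritical N s) : Submodule ℝ (Lp ℝ 2 (volume : Measure (Euc N × Euc N))) where
  carrier := {F | ∃ u, Hs N s u ∧ F =ᵐ[volume] diffQuot N s u}
  add_mem' := by
    rintro F G ⟨u, hu, hF⟩ ⟨v, hv, hG⟩
    refine ⟨u + v, hu.add h hv, ?_⟩
    filter_upwards [Lp.coeFn_add F G, hF, hG] with x h1 h2 h3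
    rw [h1, Pi.add_apply, h2, h3, diffQuot_add, Pi.add_apply]
  zero_mem' := by
    refine ⟨0, hs_zero h, ?_⟩
    filter_upwards [Lp.coeFn_zero ℝ 2 (volume : Measure (Euc N × Euc N))] with x h1
    rw [h1]; simp [diffQuot]
  smul_mem' := by
    rintro c F ⟨u, hu, hF⟩
    refine ⟨c • u, hu.smul h c, ?_⟩
    filter_upwards [Lp.coeFn_smul c F, hF] with x h1 h2
    rw [h1, Pi.smul_apply, h2, diffQuot_smul, Pi.smul_apply]

/-- The element of `hsSpace` attached to a function. -/
def toHs (h : Subcritical N s) (u : Euc N → ℝ) (hu : Hs N s u) : hsSpace h :=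
  ⟨hu.memLp_diffQuot.toLp, u, hu, hu.memLp_diffQuot.coeFn_toLp⟩

lemma coeFn_toHs (h : Subcritical N s) {u : Euc N → ℝ} (hu : Hs N s u) :
    (toHs h u hu : Lp ℝ 2 (volume : Measure (Euc N × Euc N))) =ᵐ[volume] diffQuot N s u :=
  hu.memLp_diffQuot.coeFn_toLp

/-- A function representing an element of `hsSpace`. -/
def ofHs (h : Subcritical N s) (F : hsSpace h) : Euc N → ℝ := F.2.choose

lemma hs_ofHs (h : Subcritical N s) (F : hsSpace h) : Hs N s (ofHs h F) := F.2.choose_spec.1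

lemma toHs_ofHs (h : Subcritical N s) (F : hsSpace h) : toHs h (ofHs h F) (hs_ofHs h F) = F := by
  apply Subtype.ext
  apply Lp.ext
  exact (coeFn_toHs h (hs_ofHs h F)).trans F.2.choose_spec.2.symm

lemma inner_toHs (h : Subcritical N s) {u v : Euc N → ℝ} (hu : Hs N s u) (hv : Hs N s v) :
    inner ℝ (toHs h u hu) (toHs h v hv) = gagInner N s u v := by
  rw [Submodule.coe_inner, L2.inner_def, gagInner_eq]
  refine integral_congr_ae ?_
  filter_upwards [coeFn_toHs h hu, coeFn_toHs h hv] with p h1 h2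
  rw [h1, h2]
  simp [mul_comm]

lemma norm_toHs (h : Subcritical N s) {u : Euc N → ℝ} (hu : Hs N s u) :
    ‖toHs h u hu‖ = √(gagSq N s u) := by
  rw [← gagInner_self, ← inner_toHs h hu hu, real_inner_self_eq_norm_sq, sqrt_sq (norm_nonneg _)]

lemma toHs_sub (h : Subcritical N s) {u v : Euc N → ℝ} (hu : Hs N s u) (hv : Hs N s v) :
    toHs h (u - v) (hu.sub h hv) = toHs h u hu - toHs h v hv := by
  apply Subtype.ext
  apply Lp.ext
  have h3 : diffQuot N s (u - v) = diffQuot N s u - diffQuot N s v := by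
    ext p; simp [diffQuot]; ring
  rw [Submodule.coe_sub]
  filter_upwards [coeFn_toHs h (hu.sub h hv), coeFn_toHs h hu, coeFn_toHs h hv,
    Lp.coeFn_sub (toHs h u hu).1 (toHs h v hv).1] with p h1 h2 h4 h5
  rw [h5, h1, h3, Pi.sub_apply, Pi.sub_apply, h2, h4]

lemma isClosed_hsSpace (h : Subcritical N s) :
    IsClosed (hsSpace h : Set (Lp ℝ 2 (volume : Measure (Euc N × Euc N)))) := by
  apply IsSeqClosed.isClosed
  intro F F₀ hF hlim
  have hp := h.two_lt
  set q := ENNReal.ofReal (twoStar N s)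
  have : Fact (1 ≤ q) := ⟨by
    rw [← ENNReal.ofReal_one]; exact ENNReal.ofReal_le_ofReal (by linarith)⟩
  obtain ⟨C, hC0, hC⟩ := exists_sobolev h
  set u : ℕ → Euc N → ℝ := fun k => ofHs h ⟨F k, hF k⟩
  have hu : ∀ k, Hs N s (u k) := fun k => hs_ofHs h _
  have hFu : ∀ k, F k =ᵐ[volume] diffQuot N s (u k) := fun k => (hF k).choose_spec.2
  have hdist : ∀ k l, dist ((hu k).memLp h).toLp ((hu l).memLp h).toLp ≤
      C ^ (twoStar N s)⁻¹ * dist (F k) (F l) := by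
    intro k l
    rw [dist_eq_norm, ← MemLp.toLp_sub, Lp.norm_toLp, eLpNorm_critical h ((hu k).sub h (hu l))]
    have h1 : dist (F k) (F l) = √(gagSq N s (u k - u l)) := by
      rw [← norm_toHs h ((hu k).sub h (hu l)), toHs_sub h (hu k) (hu l), dist_eq_norm]
      have e : ∀ k, toHs h (u k) (hu k) = ⟨F k, hF k⟩ := fun k => toHs_ofHs h ⟨F k, hF k⟩
      rw [e, e]; rfl
    have hG := gagSq_nonneg (N := N) (s := s) (u k - u l)
    have h2 := rpow_le_rpow (critInt_nonneg _) (hC _ ((hu k).sub h (hu l)))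
      (show 0 ≤ (twoStar N s)⁻¹ by positivity)
    rw [mul_rpow hC0.le (by positivity), ← rpow_mul hG] at h2
    rw [h1, sqrt_eq_rpow]
    convert h2 using 3
    field_simp
  have hcau : CauchySeq fun k => ((hu k).memLp h).toLp := by
    have hc := hlim.cauchySeq
    rw [Metric.cauchySeq_iff'] at hc ⊢
    intro ε hε
    have hC' : 0 < C ^ (twoStar N s)⁻¹ := by positivity
    obtain ⟨n, hn⟩ := hc (ε / C ^ (twoStar N s)⁻¹) (by positivity)
    refine ⟨n, fun k hk => (hdist k n).trans_lt ?_⟩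
    have := hn k hk
    rwa [lt_div_iff₀' hC'] at this
  obtain ⟨U, hU⟩ := cauchySeq_tendsto_of_complete hcau
  obtain ⟨ns, hns, hae⟩ := (tendstoInMeasure_of_tendsto_Lp hU).exists_seq_tendsto_ae
  obtain ⟨ms, hms, hae'⟩ := (tendstoInMeasure_of_tendsto_Lp
    (hlim.comp hns.tendsto_atTop)).exists_seq_tendsto_ae
  have hUae : ∀ᵐ x, Tendsto (fun i => u (ns (ms i)) x) atTop (𝓝 (U x)) := by
    have := ae_all_iff.2 fun k => ((hu k).memLp h).coeFn_toLp
    filter_upwards [hae, this] with x h1 h2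
    simp only [h2] at h1
    exact h1.comp hms.tendsto_atTop
  have hmeas : Measurable (U : Euc N → ℝ) := (Lp.stronglyMeasurable U).measurable
  have hF₀ : F₀ =ᵐ[volume] diffQuot N s U := by
    have h1 : ∀ᵐ p : Euc N × Euc N, Tendsto (fun i => u (ns (ms i)) p.1) atTop (𝓝 (U p.1)) :=
      Measure.quasiMeasurePreserving_fst.ae hUae
    have h2 : ∀ᵐ p : Euc N × Euc N, Tendsto (fun i => u (ns (ms i)) p.2) atTop (𝓝 (U p.2)) :=
      Measure.quasiMeasurePreserving_snd.ae hUae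
    filter_upwards [h1, h2, hae', ae_all_iff.2 hFu] with p h1 h2 h3 h4
    refine tendsto_nhds_unique h3 ?_
    simp only [Function.comp_apply, h4]
    exact (h1.sub h2).mul_const _
  exact ⟨U, (hs_iff h).2 ⟨hmeas, Lp.memLp U, (Lp.memLp F₀).ae_eq hF₀⟩, hF₀⟩

instance completeSpace_hsSpace (h : Subcritical N s) : CompleteSpace (hsSpace h) :=
  (isClosed_hsSpace h).completeSpace_coe

/-- The Riesz representation theorem in `Ḣ^s(ℝ^N)`. -/
theorem exists_riesz (h : Subcritical N s) (ℓ : (Euc N → ℝ) → ℝ) {K : ℝ}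
    (hadd : ∀ u v, Hs N s u → Hs N s v → ℓ (u + v) = ℓ u + ℓ v)
    (hsmul : ∀ (c : ℝ) u, Hs N s u → ℓ (c • u) = c * ℓ u)
    (hbound : ∀ u, Hs N s u → |ℓ u| ≤ K * √(gagSq N s u)) :
    ∃ w, Hs N s w ∧ ∀ v, Hs N s v → ℓ v = gagInner N s w v := by
  have hwd : ∀ u v (hu : Hs N s u) (hv : Hs N s v), toHs h u hu = toHs h v hv → ℓ u = ℓ v := by
    intro u v hu hv huv
    have h1 := hbound (u - v) (hu.sub h hv)
    rw [← norm_toHs h (hu.sub h hv), toHs_sub h hu hv, huv, sub_self, norm_zero, mul_zero] at h1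
    have h2 : ℓ (u - v) = ℓ u - ℓ v := by
      have : u - v = u + (-1 : ℝ) • v := by rw [neg_one_smul, ← sub_eq_add_neg]
      rw [this, hadd _ _ hu (hv.smul h _), hsmul _ _ hv]; ring
    rw [h2] at h1
    exact sub_eq_zero.1 (abs_eq_zero.1 (le_antisymm h1 (abs_nonneg _)))
  have hofadd : ∀ u v (hu : Hs N s u) (hv : Hs N s v),
      toHs h (u + v) (hu.add h hv) = toHs h u hu + toHs h v hv := by
    intro u v hu hv
    have := toHs_sub h (hu.add h hv) hv
    simp only [add_sub_cancel_right] at this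
    rw [this, sub_add_cancel]
  have hofsmul : ∀ (c : ℝ) u (hu : Hs N s u), toHs h (c • u) (hu.smul h c) = c • toHs h u hu := by
    intro c u hu
    apply Subtype.ext
    apply Lp.ext
    rw [Submodule.coe_smul]
    filter_upwards [coeFn_toHs h (hu.smul h c), coeFn_toHs h hu,
      Lp.coeFn_smul c (toHs h u hu).1] with p h1 h2 h3
    rw [h3, h1, diffQuot_smul, Pi.smul_apply, Pi.smul_apply, h2]
  let L : hsSpace h →ₗ[ℝ] ℝ :=
    { toFun := fun F => ℓ (ofHs h F)
      map_add' := fun F G => by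
        rw [← hadd _ _ (hs_ofHs h F) (hs_ofHs h G)]
        refine hwd _ _ (hs_ofHs h _) ((hs_ofHs h F).add h (hs_ofHs h G)) ?_
        rw [hofadd _ _ (hs_ofHs h F) (hs_ofHs h G), toHs_ofHs, toHs_ofHs, toHs_ofHs]
      map_smul' := fun c F => by
        rw [RingHom.id_apply, smul_eq_mul, ← hsmul _ _ (hs_ofHs h F)]
        refine hwd _ _ (hs_ofHs h _) ((hs_ofHs h F).smul h c) ?_
        rw [hofsmul _ _ (hs_ofHs h F), toHs_ofHs, toHs_ofHs] }
  let Lc : StrongDual ℝ (hsSpace h) := L.mkContinuous K fun F => by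
    have := hbound (ofHs h F) (hs_ofHs h F)
    rwa [← norm_toHs h (hs_ofHs h F), toHs_ofHs] at this
  refine ⟨ofHs h ((InnerProductSpace.toDual ℝ (hsSpace h)).symm Lc), hs_ofHs h _, fun v hv => ?_⟩
  rw [← inner_toHs h (hs_ofHs h _) hv, toHs_ofHs, InnerProductSpace.toDual_symm_apply]
  refine hwd _ _ hv (hs_ofHs h _) ?_
  rw [toHs_ofHs]

/-- Bounded sequences of `Ḣ^s(ℝ^N)` have weakly convergent subsequences. -/
theorem exists_weak_limit (h : Subcritical N s) {w : ℕ → Euc N → ℝ} (hw : ∀ k, Hs N s (w k))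
    (hb : ∀ k, gagSq N s (w k) ≤ 1) :
    ∃ (w₀ : Euc N → ℝ) (φ : ℕ → ℕ), Hs N s w₀ ∧ StrictMono φ ∧ ∀ v, Hs N s v →
      Tendsto (fun k => gagInner N s (w (φ k)) v) atTop (𝓝 (gagInner N s w₀ v)) := by
  have : Fact ((2 : ENNReal) ≠ ⊤) := ⟨by simp⟩
  have hcg : MeasurableSpace.CountablyGenerated (Euc N × Euc N) := inferInstance
  have : MeasureTheory.IsSeparable (volume : Measure (Euc N × Euc N)) :=
    @instIsSeparableOfCountablyGeneratedOfSFinite _ _ _ hcg inferInstance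
  have : SecondCountableTopology (Lp ℝ 2 (volume : Measure (Euc N × Euc N))) :=
    Lp.SecondCountableTopology
  let f : ℕ → WeakDual ℝ (hsSpace h) := fun k =>
    StrongDual.toWeakDual (InnerProductSpace.toDual ℝ (hsSpace h) (toHs h (w k) (hw k)))
  have hf : ∀ k, f k ∈ WeakDual.toStrongDual ⁻¹'
      Metric.closedBall (0 : StrongDual ℝ (hsSpace h)) 1 := by
    intro k
    have h1 : ‖InnerProductSpace.toDual ℝ (hsSpace h) (toHs h (w k) (hw k))‖ ≤ 1 := by
      rw [LinearIsometryEquiv.norm_map, norm_toHs]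
      exact sqrt_le_one.2 (hb k)
    exact (mem_closedBall_zero_iff (E := StrongDual ℝ (hsSpace h))).2 h1
  obtain ⟨x, -, φ, hφ, hx⟩ := WeakDual.isSeqCompact_closedBall ℝ (hsSpace h) 0 1 hf
  refine ⟨ofHs h ((InnerProductSpace.toDual ℝ (hsSpace h)).symm (WeakDual.toStrongDual x)), φ,
    hs_ofHs h _, hφ, fun v hv => ?_⟩
  rw [← inner_toHs h (hs_ofHs h _) hv, toHs_ofHs, InnerProductSpace.toDual_symm_apply]
  have h1 := ((WeakDual.eval_continuous (toHs h v hv)).tendsto x).comp hx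
  refine h1.congr fun k => ?_
  rw [← inner_toHs h (hw (φ k)) hv]
  rfl

end

section

variable {N : ℕ} {s : ℝ}

lemma exists_ballAvg_bound (h : Subcritical N s) :
    ∃ K, 0 < K ∧ ∀ u, Hs N s u → ∀ x r, 0 < r →
      r ^ (((N : ℝ) - 2 * s) / 2) * |ballAvg u x r| ≤ K * √(gagSq N s u) := by
  have hω := ballVol_pos (N := N)
  obtain ⟨C, hC0, hC⟩ := exists_sobolev h
  have hp := h.twoStar_pos
  refine ⟨(C * (ballVol N)⁻¹) ^ (twoStar N s)⁻¹, by positivity, fun u hu x r hr => ?_⟩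
  have hG := gagSq_nonneg (N := N) (s := s) u
  have h1 := ((ballAvg_mass_le h hu x hr).trans
      (setIntegral_le_integral hu.lp (ae_of_all _ fun y => by positivity))).trans (hC u hu)
  have h2 : (r ^ (((N : ℝ) - 2 * s) / 2) * |ballAvg u x r|) ^ twoStar N s ≤
      C * (ballVol N)⁻¹ * gagSq N s u ^ (twoStar N s / 2) := by
    rw [← div_eq_mul_inv, div_mul_eq_mul_div, le_div_iff₀ hω, mul_comm]; exact h1
  rw [← le_rpow_inv_iff_of_pos (by positivity) (by positivity) hp,
    mul_rpow (by positivity) (by positivity), ← rpow_mul hG] at h2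
  rw [sqrt_eq_rpow]
  convert h2 using 3
  field_simp

lemma ballAvg_add (h : Subcritical N s) {u v : Euc N → ℝ} (hu : Hs N s u) (hv : Hs N s v)
    (x : Euc N) {r : ℝ} (hr : 0 < r) : ballAvg (u + v) x r = ballAvg u x r + ballAvg v x r := by
  simp only [ballAvg_eq _ _ hr, Pi.add_apply]
  rw [integral_add (hu.integrableOn_ball h x r) (hv.integrableOn_ball h x r), mul_add]

lemma ballAvg_smul (c : ℝ) (u : Euc N → ℝ) (x : Euc N) {r : ℝ} (hr : 0 < r) :
    ballAvg (c • u) x r = c * ballAvg u x r := by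
  simp only [ballAvg_eq _ _ hr, Pi.smul_apply, smul_eq_mul]
  rw [integral_const_mul]; ring

lemma exists_ballAvg_repr (h : Subcritical N s) (x : Euc N) {r : ℝ} (hr : 0 < r) :
    ∃ g, Hs N s g ∧ ∀ v, Hs N s v → ballAvg v x r = gagInner N s g v := by
  obtain ⟨K, -, hK⟩ := exists_ballAvg_bound h
  have hr' : 0 < r ^ (((N : ℝ) - 2 * s) / 2) := by positivity
  refine exists_riesz h (fun v => ballAvg v x r) (K := K / r ^ (((N : ℝ) - 2 * s) / 2))
    (fun u v hu hv => ballAvg_add h hu hv x hr) (fun c u _ => ballAvg_smul c u x hr) fun u hu => ?_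
  rw [div_mul_eq_mul_div, le_div_iff₀ hr', mul_comm]
  exact hK u hu x r hr

lemma measurable_ballAvg {u : Euc N → ℝ} (hu : Measurable u) {r : ℝ} (hr : 0 < r) :
    Measurable fun x => ballAvg u x r := by
  simp only [ballAvg_eq u _ hr]
  refine Measurable.const_mul ?_ _
  have hset : MeasurableSet {p : Euc N × Euc N | dist p.2 p.1 < r} :=
    measurableSet_lt (by fun_prop) measurable_const
  have h1 : StronglyMeasurable (Set.indicator {p : Euc N × Euc N | dist p.2 p.1 < r}
      fun p => u p.2) := ((hu.comp measurable_snd).indicator hset).stronglyMeasurable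
  have h2 := (h1.integral_prod_right' (ν := (volume : Measure (Euc N)))).measurable
  convert h2 using 2 with x
  rw [← integral_indicator measurableSet_ball]
  rfl

/-- An integrable positive weight, bounded by one. -/
def weight (N : ℕ) (x : Euc N) : ℝ := (1 + ‖x‖) ^ (-((N : ℝ) + 1))

lemma weight_pos (x : Euc N) : 0 < weight N x := by unfold weight; positivity

lemma weight_le_one (x : Euc N) : weight N x ≤ 1 :=
  rpow_le_one_of_one_le_of_nonpos (by linarith [norm_nonneg x]) (by linarith [N.cast_nonneg (α := ℝ)])

lemma integrable_weight : Integrable (weight N) := by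
  unfold weight
  exact integrable_one_add_norm (by simp)

lemma measurable_weight : Measurable (weight N) := by unfold weight; fun_prop

lemma le_weight_of_norm_le {x : Euc N} {R : ℝ} (hx : ‖x‖ ≤ R) :
    (1 + R) ^ (-((N : ℝ) + 1)) ≤ weight N x := by
  unfold weight
  refine rpow_le_rpow_of_nonpos (by positivity) (by linarith) ?_
  linarith [N.cast_nonneg (α := ℝ)]

/-- Splitting of the weighted `L²` integral at scale `r`. -/
lemma weighted_sq_le_ae (h : Subcritical N s) {u : Euc N → ℝ} (hu : Hs N s u) {r : ℝ}
    (hr : 0 < r) : ∀ᵐ x, weight N x * u x ^ 2 ≤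
      2 * ((ballVol N)⁻¹ * r ^ (2 * s) * gagDens N s u x) +
        2 * (weight N x * ballAvg u x r ^ 2) := by
  filter_upwards [ae_integrable_slice hu] with x hx
  have h1 := sq_sub_ballAvg_le h hu hx hr
  have h2 := weight_pos x
  have h3 := weight_le_one x
  have h4 : u x ^ 2 ≤ 2 * (u x - ballAvg u x r) ^ 2 + 2 * ballAvg u x r ^ 2 := by
    nlinarith [sq_nonneg (u x - 2 * ballAvg u x r)]
  have h5 : weight N x * (u x - ballAvg u x r) ^ 2 ≤ (u x - ballAvg u x r) ^ 2 :=
    mul_le_of_le_one_left (sq_nonneg _) h3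
  nlinarith

lemma integrable_weight_mul_ballAvg_sq (h : Subcritical N s) {u : Euc N → ℝ} (hu : Hs N s u)
    {r : ℝ} (hr : 0 < r) : Integrable fun x => weight N x * ballAvg u x r ^ 2 := by
  obtain ⟨K, -, hK⟩ := exists_ballAvg_bound h
  have hr' : 0 < r ^ (((N : ℝ) - 2 * s) / 2) := by positivity
  refine Integrable.mono' (integrable_weight.mul_const
    ((K * √(gagSq N s u) / r ^ (((N : ℝ) - 2 * s) / 2)) ^ 2))
    (measurable_weight.mul ((measurable_ballAvg hu.meas hr).pow_const 2)).aestronglyMeasurable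
    (ae_of_all _ fun x => ?_)
  have h2 := weight_pos x
  rw [norm_of_nonneg (by positivity), ← sq_abs (ballAvg u x r)]
  gcongr
  rw [le_div_iff₀ hr', mul_comm]
  exact hK u hu x r hr

lemma integrable_weight_mul_sq (h : Subcritical N s) {u : Euc N → ℝ} (hu : Hs N s u) :
    Integrable fun x => weight N x * u x ^ 2 := by
  refine Integrable.mono' ((((integrable_gagDens hu).const_mul ((ballVol N)⁻¹ * 1 ^ (2 * s))).const_mul
    2).add ((integrable_weight_mul_ballAvg_sq h hu one_pos).const_mul 2))
    (measurable_weight.mul (hu.meas.pow_const 2)).aestronglyMeasurable ?_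
  filter_upwards [weighted_sq_le_ae h hu one_pos] with x hx
  have h2 := weight_pos x
  rw [norm_of_nonneg (by positivity)]
  exact hx

lemma integral_weight_mul_sq_le (h : Subcritical N s) {u : Euc N → ℝ} (hu : Hs N s u) {r : ℝ}
    (hr : 0 < r) : ∫ x, weight N x * u x ^ 2 ≤
      2 * ((ballVol N)⁻¹ * r ^ (2 * s) * gagSq N s u) +
        2 * ∫ x, weight N x * ballAvg u x r ^ 2 := by
  have h1 := ((integrable_gagDens hu).const_mul ((ballVol N)⁻¹ * r ^ (2 * s))).const_mul 2
  have h2 := (integrable_weight_mul_ballAvg_sq h hu hr).const_mul 2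
  refine (integral_mono_ae (integrable_weight_mul_sq h hu) (h1.add h2)
    (weighted_sq_le_ae h hu hr)).trans_eq ?_
  change ∫ x, (2 * ((ballVol N)⁻¹ * r ^ (2 * s) * gagDens N s u x)) +
    (2 * (weight N x * ballAvg u x r ^ 2)) = _
  rw [integral_add h1 h2, integral_const_mul, integral_const_mul, integral_const_mul,
    integral_gagDens hu]

/-- Weak convergence in `Ḣ^s(ℝ^N)` implies convergence in weighted `L²`. -/
theorem tendsto_weighted_sq (h : Subcritical N s) {w : ℕ → Euc N → ℝ} {w₀ : Euc N → ℝ}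
    (hw : ∀ k, Hs N s (w k)) (hb : ∀ k, gagSq N s (w k) ≤ 1) (hw₀ : Hs N s w₀)
    (hlim : ∀ v, Hs N s v →
      Tendsto (fun k => gagInner N s (w k) v) atTop (𝓝 (gagInner N s w₀ v))) :
    Tendsto (fun k => ∫ x, weight N x * (w k x - w₀ x) ^ 2) atTop (𝓝 0) := by
  have hω := ballVol_pos (N := N)
  obtain ⟨K, hK0, hK⟩ := exists_ballAvg_bound h
  have hd : ∀ k, Hs N s (w k - w₀) := fun k => (hw k).sub h hw₀
  set Γ : ℝ := 2 + 2 * gagSq N s w₀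
  have hG0 := gagSq_nonneg (N := N) (s := s) w₀
  have hΓ0 : 0 < Γ := by positivity
  have hΓ : ∀ k, gagSq N s (w k - w₀) ≤ Γ := fun k =>
    (gagSq_sub_le h (hw k) hw₀).trans (by linarith [hb k])
  have havg : ∀ x r, 0 < r → Tendsto (fun k => ballAvg (w k - w₀) x r) atTop (𝓝 0) := by
    intro x r hr
    obtain ⟨g, hg, hgv⟩ := exists_ballAvg_repr h x hr
    have h1 := (hlim g hg).sub_const (gagInner N s w₀ g)
    rw [sub_self] at h1
    refine h1.congr fun k => ?_
    rw [hgv _ (hd k), gagInner_comm g, gagInner_sub_left h (hw k) hw₀ hg]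
  have hconv : ∀ r, 0 < r →
      Tendsto (fun k => ∫ x, weight N x * ballAvg (w k - w₀) x r ^ 2) atTop (𝓝 0) := by
    intro r hr
    have hr' : 0 < r ^ (((N : ℝ) - 2 * s) / 2) := by positivity
    have := tendsto_integral_of_dominated_convergence
      (F := fun k x => weight N x * ballAvg (w k - w₀) x r ^ 2) (f := fun _ => (0 : ℝ))
      (fun x => weight N x * (K * √Γ / r ^ (((N : ℝ) - 2 * s) / 2)) ^ 2)
      (fun k => (integrable_weight_mul_ballAvg_sq h (hd k) hr).aestronglyMeasurable)
      (integrable_weight.mul_const _) (fun k => ae_of_all _ fun x => ?_) (ae_of_all _ fun x => ?_)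
    · simpa using this
    · have h2 := weight_pos x
      rw [norm_of_nonneg (by positivity), ← sq_abs (ballAvg _ x r)]
      gcongr
      rw [le_div_iff₀ hr', mul_comm]
      exact (hK _ (hd k) x r hr).trans (by gcongr; exact hΓ k)
    · simpa using ((havg x r hr).pow 2).const_mul (weight N x)
  have hs := h.pos
  rw [Metric.tendsto_atTop]
  intro ε hε
  set r : ℝ := (ε * ballVol N / (4 * Γ)) ^ (2 * s)⁻¹ with hr_def
  have hr : 0 < r := by positivity
  have hr2 : r ^ (2 * s) = ε * ballVol N / (4 * Γ) := by
    rw [hr_def, ← rpow_mul (by positivity), inv_mul_cancel₀ (by positivity), rpow_one]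
  obtain ⟨n, hn⟩ := (Metric.tendsto_atTop.1 (hconv r hr)) (ε / 4) (by positivity)
  refine ⟨n, fun k hk => ?_⟩
  have h1 := hn k hk
  rw [dist_zero_right] at h1 ⊢
  have h2 := integral_weight_mul_sq_le h (hd k) hr
  have h3 : 0 ≤ ∫ x, weight N x * (w k x - w₀ x) ^ 2 :=
    integral_nonneg fun x => mul_nonneg (weight_pos x).le (sq_nonneg _)
  rw [norm_of_nonneg h3]
  have h4 := (le_norm_self _).trans_lt h1
  have h5 : (ballVol N)⁻¹ * r ^ (2 * s) * gagSq N s (w k - w₀) ≤ ε / 4 := by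
    calc _ ≤ (ballVol N)⁻¹ * r ^ (2 * s) * Γ := by gcongr; exact hΓ k
      _ = ε / 4 := by rw [hr2]; field_simp
  simp only [Pi.sub_apply] at h2
  linarith

lemma exists_ae_tendsto_of_weighted_sq (h : Subcritical N s) {w : ℕ → Euc N → ℝ} {w₀ : Euc N → ℝ}
    (hw : ∀ k, Hs N s (w k)) (hw₀ : Hs N s w₀)
    (hlim : Tendsto (fun k => ∫ x, weight N x * (w k x - w₀ x) ^ 2) atTop (𝓝 0)) :
    ∃ φ : ℕ → ℕ, StrictMono φ ∧ ∀ᵐ x, Tendsto (fun k => w (φ k) x) atTop (𝓝 (w₀ x)) := by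
  have hint : ∀ k, Integrable fun x => weight N x * (w k x - w₀ x) ^ 2 := fun k =>
    integrable_weight_mul_sq h ((hw k).sub h hw₀)
  have h1 : TendstoInMeasure volume (fun k x => weight N x * (w k x - w₀ x) ^ 2) atTop
      (fun _ => (0 : ℝ)) := by
    refine tendstoInMeasure_of_tendsto_eLpNorm one_ne_zero (fun k => (hint k).aestronglyMeasurable)
      aestronglyMeasurable_const ?_
    have h2 := (ENNReal.continuous_ofReal.tendsto 0).comp hlim
    rw [ENNReal.ofReal_zero] at h2
    refine h2.congr fun k => ?_
    rw [eLpNorm_one_eq_lintegral_enorm, Function.comp_apply, ofReal_integral_eq_lintegral_ofReal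
      (hint k) (ae_of_all _ fun x => mul_nonneg (weight_pos x).le (sq_nonneg _))]
    refine lintegral_congr fun x => ?_
    rw [Pi.sub_apply, sub_zero, Real.enorm_of_nonneg (mul_nonneg (weight_pos x).le (sq_nonneg _))]
  obtain ⟨φ, hφ, hae⟩ := h1.exists_seq_tendsto_ae
  refine ⟨φ, hφ, ?_⟩
  filter_upwards [hae] with x hx
  have h2 := hx.const_mul (weight N x)⁻¹
  simp only [inv_mul_cancel_left₀ (weight_pos x).ne', mul_zero] at h2
  have h3 := h2.sqrt
  simp only [sqrt_sq_eq_abs, sqrt_zero] at h3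
  have h4 := (tendsto_zero_iff_abs_tendsto_zero _).2 h3
  simpa using h4.add_const (w₀ x)

end

section

variable {N : ℕ} {s : ℝ}

/-- The rescaling of `u` around `a` at scale `r` that preserves both critical integrals. -/
def dil (s : ℝ) (a : Euc N) (r : ℝ) (u : Euc N → ℝ) (x : Euc N) : ℝ :=
  r ^ (((N : ℝ) - 2 * s) / 2) * u (a + r • x)

lemma integral_comp_affine {E : Type*} [NormedAddCommGroup E] [NormedSpace ℝ E]
    [FiniteDimensional ℝ E] [MeasurableSpace E] [BorelSpace E] (μ : Measure E) [μ.IsAddHaarMeasure]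
    (f : E → ℝ) (a : E) {r : ℝ} (hr : 0 < r) :
    ∫ x, f (a + r • x) ∂μ = (r ^ (Module.finrank ℝ E : ℝ))⁻¹ * ∫ x, f x ∂μ := by
  rw [Measure.integral_comp_smul μ (fun x => f (a + x)) r, integral_add_left_eq_self f a, rpow_natCast,
    abs_of_pos (by positivity), smul_eq_mul]

lemma integrable_comp_affine {E : Type*} [NormedAddCommGroup E] [NormedSpace ℝ E]
    [FiniteDimensional ℝ E] [MeasurableSpace E] [BorelSpace E] (μ : Measure E) [μ.IsAddHaarMeasure]
    {f : E → ℝ} (hf : Integrable f μ) (a : E) {r : ℝ} (hr : 0 < r) :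
    Integrable (fun x => f (a + r • x)) μ :=
  (integrable_comp_smul_iff μ (fun x => f (a + x)) hr.ne').2 (hf.comp_add_left a)

instance : (volume : Measure (Euc N × Euc N)).IsAddHaarMeasure :=
  inferInstanceAs ((volume : Measure (Euc N)).prod volume).IsAddHaarMeasure

lemma finrank_euc : (Module.finrank ℝ (Euc N) : ℝ) = N := by simp

lemma finrank_euc_prod : (Module.finrank ℝ (Euc N × Euc N) : ℝ) = N + N := by simp

section dil
variable {a : Euc N} {r : ℝ}

lemma measurable_dil {u : Euc N → ℝ} (hu : Measurable u) : Measurable (dil s a r u) := by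
  unfold dil; fun_prop

lemma dil_gag_density (hr : 0 < r) (u v : Euc N → ℝ) (p : Euc N × Euc N) :
    (dil s a r u p.1 - dil s a r u p.2) * (dil s a r v p.1 - dil s a r v p.2) /
        dist p.1 p.2 ^ ((N : ℝ) + 2 * s) =
      r ^ ((N : ℝ) + N) * (fun q : Euc N × Euc N => (u q.1 - u q.2) * (v q.1 - v q.2) /
        dist q.1 q.2 ^ ((N : ℝ) + 2 * s)) ((a, a) + r • p) := by
  have hd : dist (a + r • p.1) (a + r • p.2) = r * dist p.1 p.2 := by
    rw [dist_add_left, dist_smul₀, norm_of_nonneg hr.le]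
  have hr2 : r ^ ((N : ℝ) + N) = r ^ (((N : ℝ) - 2 * s) / 2) * r ^ (((N : ℝ) - 2 * s) / 2) *
      r ^ ((N : ℝ) + 2 * s) := by
    rw [← rpow_add hr, ← rpow_add hr]; congr 1; ring
  simp only [dil, Prod.fst_add, Prod.snd_add, Prod.smul_fst, Prod.smul_snd, hd]
  rw [mul_rpow hr.le dist_nonneg, hr2]
  have := rpow_pos_of_pos hr ((N : ℝ) + 2 * s)
  rw [← mul_div_mul_left _ _ this.ne']
  ring

lemma gagInner_dil (hr : 0 < r) (u v : Euc N → ℝ) :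
    gagInner N s (dil s a r u) (dil s a r v) = gagInner N s u v := by
  unfold gagInner
  rw [integral_congr_ae (ae_of_all _ (dil_gag_density hr u v)), integral_const_mul,
    integral_comp_affine volume (fun q : Euc N × Euc N => (u q.1 - u q.2) * (v q.1 - v q.2) /
      dist q.1 q.2 ^ ((N : ℝ) + 2 * s)) _ hr, finrank_euc_prod, ← mul_assoc,
    mul_inv_cancel₀ (rpow_pos_of_pos hr _).ne', one_mul]

lemma gagSq_dil (hr : 0 < r) (u : Euc N → ℝ) : gagSq N s (dil s a r u) = gagSq N s u := by
  rw [← gagInner_self, gagInner_dil hr, gagInner_self]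

lemma rpow_dil (h : Subcritical N s) (hr : 0 < r) :
    (r ^ (((N : ℝ) - 2 * s) / 2)) ^ twoStar N s = r ^ (N : ℝ) := by
  rw [← rpow_mul hr.le, h.half_mul_twoStar]

lemma dil_crit_density (h : Subcritical N s) (hr : 0 < r) (u : Euc N → ℝ) (x : Euc N) :
    |dil s a r u x| ^ twoStar N s =
      r ^ (N : ℝ) * (fun y => |u y| ^ twoStar N s) (a + r • x) := by
  simp only [dil, abs_mul, abs_of_pos (rpow_pos_of_pos hr _)]
  rw [mul_rpow (rpow_nonneg hr.le _) (abs_nonneg _), rpow_dil h hr]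

lemma critInt_dil (h : Subcritical N s) (hr : 0 < r) (u : Euc N → ℝ) :
    critInt N s (dil s a r u) = critInt N s u := by
  unfold critInt
  rw [integral_congr_ae (ae_of_all _ (dil_crit_density h hr u)), integral_const_mul,
    integral_comp_affine volume (fun y => |u y| ^ twoStar N s) _ hr, finrank_euc, ← mul_assoc,
    mul_inv_cancel₀ (rpow_pos_of_pos hr _).ne', one_mul]

lemma critPair_dil (h : Subcritical N s) (hr : 0 < r) (u v : Euc N → ℝ) :
    critPair N s (dil s a r u) (dil s a r v) = critPair N s u v := by
  unfold critPair
  have : ∀ x, |dil s a r u x| ^ (twoStar N s - 2) * dil s a r u x * dil s a r v x =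
      r ^ (N : ℝ) * (fun y => |u y| ^ (twoStar N s - 2) * u y * v y) (a + r • x) := fun x => by
    have hq := rpow_pos_of_pos hr (((N : ℝ) - 2 * s) / 2)
    rw [← rpow_dil h hr]
    simp only [dil, abs_mul, abs_of_pos hq]
    rw [mul_rpow hq.le (abs_nonneg _)]
    set c := r ^ (((N : ℝ) - 2 * s) / 2)
    have : c ^ twoStar N s = c ^ (twoStar N s - 2) * c * c := by
      rw [mul_assoc, ← sq, ← rpow_natCast c 2, ← rpow_add hq]; congr 1; push_cast; ring
    rw [this]; ring
  rw [integral_congr_ae (ae_of_all _ this), integral_const_mul,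
    integral_comp_affine volume (fun y => |u y| ^ (twoStar N s - 2) * u y * v y) _ hr, finrank_euc, ← mul_assoc,
    mul_inv_cancel₀ (rpow_pos_of_pos hr _).ne', one_mul]

lemma _root_.MemHs.dil (h : Subcritical N s) {u : Euc N → ℝ} (hu : Hs N s u) (a : Euc N)
    (hr : 0 < r) : Hs N s (dil s a r u) where
  meas := measurable_dil hu.meas
  lp := by
    simp_rw [dil_crit_density h hr]
    exact (integrable_comp_affine _ hu.lp a hr).const_mul _
  fin := by
    have hf := hu.fin
    unfold GagFinite at *
    simp_rw [sq] at *
    simp_rw [dil_gag_density hr]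
    exact (integrable_comp_affine volume hf (a, a) hr).const_mul _
  vanish := by simp

lemma ballAvg_dil (hr : 0 < r) (u : Euc N → ℝ) (y : Euc N) :
    ballAvg (dil s a r u) y 1 = r ^ (((N : ℝ) - 2 * s) / 2) * ballAvg u (a + r • y) r := by
  have h1 : ∀ x, (Metric.ball y 1).indicator (dil s a r u) x = r ^ (((N : ℝ) - 2 * s) / 2) *
      ((Metric.ball (a + r • y) r).indicator u) (a + r • x) := fun x => by
    have : a + r • x ∈ Metric.ball (a + r • y) r ↔ x ∈ Metric.ball y 1 := by
      rw [Metric.mem_ball, Metric.mem_ball, dist_add_left, dist_smul₀, norm_of_nonneg hr.le]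
      constructor
      · intro hx; nlinarith
      · intro hx; nlinarith
    by_cases hx : x ∈ Metric.ball y 1
    · rw [Set.indicator_of_mem hx, Set.indicator_of_mem (this.2 hx)]; rfl
    · rw [Set.indicator_of_notMem hx, Set.indicator_of_notMem (fun h' => hx (this.1 h'))]; simp
  rw [ballAvg_eq _ _ one_pos, ballAvg_eq _ _ hr, ← integral_indicator measurableSet_ball,
    ← integral_indicator measurableSet_ball]
  simp_rw [h1]
  rw [integral_const_mul, integral_comp_affine _ _ _ hr, finrank_euc, rpow_natCast, one_pow]
  field_simp

lemma dil_dil_inv (hr : 0 < r) (u : Euc N → ℝ) : dil s 0 r (dil s 0 r⁻¹ u) = u := by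
  ext x
  simp only [dil, zero_add, smul_smul]
  rw [inv_mul_cancel₀ hr.ne', one_smul, ← mul_assoc, inv_rpow hr.le,
    mul_inv_cancel₀ (rpow_pos_of_pos hr _).ne', one_mul]

end dil

section isometry
variable (g : Euc N ≃ₗᵢ[ℝ] Euc N)

lemma integral_comp_isometry (f : Euc N → ℝ) : ∫ x, f (g x) = ∫ x, f x :=
  g.measurePreserving.integral_comp g.toMeasurableEquiv.measurableEmbedding f

lemma measurePreserving_prod :
    MeasurePreserving (Prod.map g g) (volume : Measure (Euc N × Euc N)) volume :=
  g.measurePreserving.prod g.measurePreserving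

lemma measurableEmbedding_prod : MeasurableEmbedding (Prod.map g g) :=
  g.toMeasurableEquiv.measurableEmbedding.prodMap g.toMeasurableEquiv.measurableEmbedding

lemma diffQuot_comp (u : Euc N → ℝ) :
    diffQuot N s (u ∘ g) = diffQuot N s u ∘ Prod.map g g := by
  ext p; simp [diffQuot]

lemma gagInner_comp (u v : Euc N → ℝ) : gagInner N s (u ∘ g) (v ∘ g) = gagInner N s u v := by
  simp only [gagInner_eq, diffQuot_comp]
  exact (measurePreserving_prod g).integral_comp (measurableEmbedding_prod g)
    fun p => diffQuot N s u p * diffQuot N s v p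

lemma critPair_comp (u v : Euc N → ℝ) : critPair N s (u ∘ g) (v ∘ g) = critPair N s u v :=
  integral_comp_isometry g fun x => |u x| ^ (twoStar N s - 2) * u x * v x

lemma _root_.MemHs.comp (h : Subcritical N s) {u : Euc N → ℝ} (hu : Hs N s u) :
    Hs N s (u ∘ g) := by
  rw [hs_iff h] at *
  refine ⟨hu.1.comp g.continuous.measurable, hu.2.1.comp_measurePreserving g.measurePreserving, ?_⟩
  rw [diffQuot_comp]
  exact hu.2.2.comp_measurePreserving (measurePreserving_prod g)

lemma ballAvg_comp (u : Euc N → ℝ) (x : Euc N) {r : ℝ} (hr : 0 < r) :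
    ballAvg (u ∘ g) x r = ballAvg u (g x) r := by
  rw [ballAvg_eq _ _ hr, ballAvg_eq _ _ hr]
  congr 1
  have := g.measurePreserving.setIntegral_preimage_emb g.toMeasurableEquiv.measurableEmbedding u
    (Metric.ball (g x) r)
  rw [← this]
  congr 2
  ext y; simp

end isometry

lemma gagInner_congr {u u' v v' : Euc N → ℝ} (hu : u =ᵐ[volume] u') (hv : v =ᵐ[volume] v') :
    gagInner N s u v = gagInner N s u' v' := by
  rw [gagInner_eq, gagInner_eq]
  refine integral_congr_ae ?_
  filter_upwards [diffQuot_congr (s := s) hu, diffQuot_congr (s := s) hv] with p h1 h2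
  rw [h1, h2]

lemma critInt_congr {u v : Euc N → ℝ} (hu : u =ᵐ[volume] v) : critInt N s u = critInt N s v :=
  integral_congr_ae (by filter_upwards [hu] with x hx; rw [hx])

lemma critPair_congr {u u' v v' : Euc N → ℝ} (hu : u =ᵐ[volume] u') (hv : v =ᵐ[volume] v') :
    critPair N s u v = critPair N s u' v' :=
  integral_congr_ae (by filter_upwards [hu, hv] with x hx hx'; rw [hx, hx'])

lemma ballAvg_congr {u v : Euc N → ℝ} (hu : u =ᵐ[volume] v) (x : Euc N) (r : ℝ) :
    ballAvg u x r = ballAvg v x r :=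
  integral_congr_ae (Measure.ae_smul_measure (ae_restrict_of_ae hu) _)

end

section

variable {N : ℕ} {s : ℝ}

lemma rpow_sub_one_mul_le {p ε a b : ℝ} (hp : 1 < p) (hε : 0 < ε) (ha : 0 ≤ a) (hb : 0 ≤ b) :
    a ^ (p - 1) * b ≤ ε * a ^ p + ε⁻¹ ^ (p - 1) * b ^ p := by
  have e : ∀ c : ℝ, 0 ≤ c → c ^ p = c ^ (p - 1) * c := fun c hc => by
    conv_rhs => rw [← rpow_one c, ← rpow_mul hc, one_mul]
    rw [← rpow_add' hc (by linarith)]; congr 1; ring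
  rcases le_total b (ε * a) with h | h
  · have : a ^ (p - 1) * b ≤ ε * a ^ p := by
      rw [e a ha]
      calc _ ≤ a ^ (p - 1) * (ε * a) := by gcongr
        _ = _ := by ring
    have h2 : 0 ≤ ε⁻¹ ^ (p - 1) * b ^ p := by positivity
    linarith
  · have h1 : a ≤ ε⁻¹ * b := by rw [inv_mul_eq_div, le_div_iff₀ hε]; linarith
    have : a ^ (p - 1) * b ≤ ε⁻¹ ^ (p - 1) * b ^ p := by
      rw [e b hb, ← mul_assoc, ← mul_rpow (by positivity) hb]
      have := hp.le
      gcongr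
    have h2 : 0 ≤ ε * a ^ p := by positivity
    linarith

lemma abs_nonlin {p : ℝ} (hp : 2 < p) (t v : ℝ) :
    |(|t| ^ (p - 2) * t * v)| = |t| ^ (p - 1) * |v| := by
  rw [abs_mul, abs_mul, abs_of_nonneg (rpow_nonneg (abs_nonneg t) _)]
  congr 1
  conv_lhs => rw [← rpow_one |t|, ← rpow_mul (abs_nonneg t), one_mul]
  rw [← rpow_add' (abs_nonneg t) (by linarith)]; congr 1; ring

lemma measurable_nonlin {p : ℝ} {u v : Euc N → ℝ} (hu : Measurable u) (hv : Measurable v) :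
    Measurable fun x => |u x| ^ (p - 2) * u x * v x := by fun_prop

lemma integrable_nonlin (h : Subcritical N s) {u v : Euc N → ℝ} (hu : Hs N s u) (hv : Hs N s v) :
    Integrable fun x => |u x| ^ (twoStar N s - 2) * u x * v x := by
  refine (hu.lp.add hv.lp).mono' (measurable_nonlin hu.meas hv.meas).aestronglyMeasurable
    (ae_of_all _ fun x => ?_)
  rw [norm_eq_abs, abs_nonlin h.two_lt]
  have := rpow_sub_one_mul_le (p := twoStar N s) (by linarith [h.two_lt]) one_pos
    (abs_nonneg (u x)) (abs_nonneg (v x))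
  simpa using this

lemma critPair_add (h : Subcritical N s) {w u v : Euc N → ℝ} (hw : Hs N s w) (hu : Hs N s u)
    (hv : Hs N s v) : critPair N s w (u + v) = critPair N s w u + critPair N s w v := by
  simp only [critPair, Pi.add_apply, mul_add]
  exact integral_add (integrable_nonlin h hw hu) (integrable_nonlin h hw hv)

lemma critPair_smul (c : ℝ) (w u : Euc N → ℝ) :
    critPair N s w (c • u) = c * critPair N s w u := by
  simp only [critPair, Pi.smul_apply, smul_eq_mul]
  rw [← integral_const_mul]
  congr 1; ext x; ring

lemma critPair_smul_left {c : ℝ} (hc : 0 < c) (w u : Euc N → ℝ) :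
    critPair N s (c • w) u = c ^ (twoStar N s - 1) * critPair N s w u := by
  simp only [critPair, Pi.smul_apply, smul_eq_mul]
  rw [← integral_const_mul]
  congr 1; ext x
  have : c ^ (twoStar N s - 1) = c ^ (twoStar N s - 2) * c := by
    rw [← rpow_add_one hc.ne']; congr 1; ring
  rw [abs_mul, abs_of_pos hc, mul_rpow hc.le (abs_nonneg _), this]; ring

lemma critPair_self (h : Subcritical N s) (w : Euc N → ℝ) : critPair N s w w = critInt N s w := by
  unfold critPair critInt
  congr 1; ext x
  have h2 := h.two_lt
  have : |w x| ^ twoStar N s = |w x| ^ (twoStar N s - 2) * |w x| ^ (2 : ℝ) := by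
    rw [← rpow_add' (abs_nonneg _) (by linarith)]; congr 1; ring
  rw [this, rpow_two, sq_abs]; ring

lemma abs_critPair_le (h : Subcritical N s) {w v : Euc N → ℝ} (hw : Hs N s w) (hv : Hs N s v) :
    |critPair N s w v| ≤ critInt N s w ^ ((twoStar N s - 1) / twoStar N s) *
      critInt N s v ^ (1 / twoStar N s) := by
  have hp := h.two_lt
  set p := twoStar N s
  have hpq : (p / (p - 1)).HolderConjugate p := by
    rw [holderConjugate_iff]
    refine ⟨by rw [lt_div_iff₀] <;> linarith, ?_⟩
    have : p - 1 ≠ 0 := by linarith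
    have : p ≠ 0 := by linarith
    field_simp; ring
  have hpow : ∀ x, (|w x| ^ (p - 1)) ^ (p / (p - 1)) = |w x| ^ p := fun x => by
    rw [← rpow_mul (abs_nonneg _)]; congr 1
    have : p - 1 ≠ 0 := by linarith
    field_simp
  have hmeas : Measurable fun x => |w x| ^ (p - 1) := by have := hw.meas; fun_prop
  have h1 : MemLp (fun x => |w x| ^ (p - 1)) (ENNReal.ofReal (p / (p - 1))) := by
    rw [← integrable_norm_rpow_iff hmeas.aestronglyMeasurable
      (by simpa using by have := hpq.pos; exact this) ENNReal.ofReal_ne_top,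
      ENNReal.toReal_ofReal hpq.nonneg]
    refine hw.lp.congr (ae_of_all _ fun x => ?_)
    simp only [norm_eq_abs, abs_of_nonneg (rpow_nonneg (abs_nonneg (w x)) _), hpow]; rfl
  have h2 := integral_mul_le_Lp_mul_Lq_of_nonneg hpq (μ := volume)
    (f := fun x => |w x| ^ (p - 1)) (g := fun x => |v x|)
    (ae_of_all _ fun x => by positivity) (ae_of_all _ fun x => abs_nonneg _) h1 (hv.memLp h).abs
  simp only [hpow, one_div_div] at h2
  exact abs_integral_le_integral_abs.trans
    ((integral_congr_ae (ae_of_all _ fun x => abs_nonlin hp _ _)).trans_le h2)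

lemma tendsto_critPair (h : Subcritical N s) {w : ℕ → Euc N → ℝ} {w₀ φ : Euc N → ℝ} {B : ℝ}
    (hw : ∀ k, Hs N s (w k)) (hw₀ : Hs N s w₀) (hφ : Hs N s φ) (hB : ∀ k, critInt N s (w k) ≤ B)
    (hlim : ∀ᵐ x, Tendsto (fun k => w k x) atTop (𝓝 (w₀ x))) :
    Tendsto (fun k => critPair N s (w k) φ) atTop (𝓝 (critPair N s w₀ φ)) := by
  have hp := h.two_lt
  set p := twoStar N s with hpdef
  set F : (Euc N → ℝ) → Euc N → ℝ := fun u x => |u x| ^ (p - 2) * u x * φ x with hF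
  have hFi : ∀ u, Hs N s u → Integrable (F u) := fun u hu => integrable_nonlin h hu hφ
  rw [tendsto_iff_dist_tendsto_zero]
  refine tendsto_order.2 ⟨fun a ha => Eventually.of_forall fun k => ha.trans_le dist_nonneg, ?_⟩
  intro δ hδ
  have hB0 : 0 ≤ B := (critInt_nonneg _).trans (hB 0)
  obtain ⟨ε, hε, hεB⟩ : ∃ ε : ℝ, 0 < ε ∧ ε * (B + critInt N s w₀) < δ / 2 := by
    have h0 := critInt_nonneg (s := s) w₀
    refine ⟨δ / 2 / (B + critInt N s w₀ + 1), by positivity, ?_⟩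
    rw [div_mul_eq_mul_div, div_lt_iff₀ (by positivity)]
    nlinarith
  set H : ℕ → Euc N → ℝ := fun k x =>
    max 0 (|F (w k) x - F w₀ x| - ε * (|w k x| ^ p + |w₀ x| ^ p)) with hH
  have hY : ∀ u : Euc N → ℝ, ∀ x, |F u x| ≤ ε * |u x| ^ p + ε⁻¹ ^ (p - 1) * |φ x| ^ p :=
    fun u x => by
      rw [hF]; simp only []
      rw [abs_nonlin hp]
      exact rpow_sub_one_mul_le (by linarith) hε (abs_nonneg _) (abs_nonneg _)
  have hHm : ∀ k, Measurable (H k) := fun k => by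
    have h1 := (measurable_nonlin (p := p) (hw k).meas hφ.meas)
    have h2 := (measurable_nonlin (p := p) hw₀.meas hφ.meas)
    have h3 := (hw k).meas
    have h4 := hw₀.meas
    exact measurable_const.max (((h1.sub h2).abs).sub (by fun_prop))
  have hHb : ∀ k x, ‖H k x‖ ≤ 2 * (ε⁻¹ ^ (p - 1) * |φ x| ^ p) := fun k x => by
    rw [norm_of_nonneg (le_max_left _ _)]
    refine max_le (by positivity) ?_
    have h1 := hY (w k) x
    have h2 := hY w₀ x
    have h3 := abs_sub (F (w k) x) (F w₀ x)
    linarith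
  have hHi : ∀ k, Integrable (H k) := fun k =>
    ((hφ.lp.const_mul _).const_mul 2).mono' (hHm k).aestronglyMeasurable (ae_of_all _ (hHb k))
  have hH0 : Tendsto (fun k => ∫ x, H k x) atTop (𝓝 (∫ _ : Euc N, (0 : ℝ))) := by
    refine tendsto_integral_of_dominated_convergence _
      (fun k => (hHm k).aestronglyMeasurable) ((hφ.lp.const_mul _).const_mul 2)
      (fun k => ae_of_all _ (hHb k)) ?_
    filter_upwards [hlim] with x hx
    have hc : Continuous fun t : ℝ => |t| ^ (p - 2) * t * φ x := by
      have : Continuous fun t : ℝ => |t| ^ (p - 2) :=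
        continuous_abs.rpow_const fun _ => Or.inr (by linarith)
      fun_prop
    have h1 : Tendsto (fun k => |F (w k) x - F w₀ x|) atTop (𝓝 0) := by
      have := ((hc.tendsto _).comp hx).sub_const (F w₀ x)
      simpa [hF] using this.abs
    refine squeeze_zero (fun k => le_max_left _ _) (fun k => ?_) h1
    refine max_le (abs_nonneg _) ?_
    have : 0 ≤ ε * (|w k x| ^ p + |w₀ x| ^ p) := by positivity
    linarith
  rw [integral_zero] at hH0
  filter_upwards [(tendsto_order.1 hH0).2 (δ / 2) (by positivity)] with k hk
  have hsub : critPair N s (w k) φ - critPair N s w₀ φ = ∫ x, (F (w k) x - F w₀ x) :=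
    (integral_sub (hFi _ (hw k)) (hFi _ hw₀)).symm
  rw [dist_eq, hsub]
  have hpi : Integrable fun x => ε * (|w k x| ^ p + |w₀ x| ^ p) :=
    ((hw k).lp.add hw₀.lp).const_mul ε
  calc |∫ x, (F (w k) x - F w₀ x)| ≤ ∫ x, |F (w k) x - F w₀ x| := abs_integral_le_integral_abs
    _ ≤ ∫ x, (H k x + ε * (|w k x| ^ p + |w₀ x| ^ p)) := by
        refine integral_mono ((hFi _ (hw k)).sub (hFi _ hw₀)).abs ((hHi k).add hpi) fun x => ?_
        have := le_max_right 0 (|F (w k) x - F w₀ x| - ε * (|w k x| ^ p + |w₀ x| ^ p))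
        simp only [hH]
        linarith
    _ = (∫ x, H k x) + ε * (critInt N s (w k) + critInt N s w₀) := by
        rw [integral_add (hHi k) hpi, integral_const_mul, integral_add (hw k).lp hw₀.lp]; rfl
    _ < δ := by
        have := hB k
        have : ε * (critInt N s (w k) + critInt N s w₀) ≤ ε * (B + critInt N s w₀) := by gcongr
        linarith

end

section

variable {N : ℕ} {s : ℝ}

lemma dil_ae {u v : Euc N → ℝ} (huv : u =ᵐ[volume] v) (a : Euc N) {r : ℝ} (hr : 0 < r) :
    dil s a r u =ᵐ[volume] dil s a r v := by
  have h1 := (measurePreserving_add_left (volume : Measure (Euc N)) a).quasiMeasurePreserving.ae huv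
  have h2 := (Measure.quasiMeasurePreserving_smul (volume : Measure (Euc N)) hr.ne').ae h1
  filter_upwards [h2] with x hx
  simp only [dil]
  rw [hx]

/-- Functions of `Ḣ^s(ℝ^N)` that are invariant under all `g ∈ G` and change sign under `σ`. -/
structure Equivariant (N : ℕ) (s : ℝ) (G : Set (Euc N ≃ₗᵢ[ℝ] Euc N)) (σ : Euc N ≃ₗᵢ[ℝ] Euc N)
    (u : Euc N → ℝ) : Prop where
  hs : Hs N s u
  inv : ∀ g ∈ G, u ∘ g =ᵐ[volume] u
  anti : u ∘ σ =ᵐ[volume] -u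

/-- Points at distance more than `R r` from the common fixed points of `G` and `σ` have `L` points
in their `G`-orbit that are `2 r`-separated, for suitable `R` depending on `L`. -/
def LargeOrbits (G : Set (Euc N ≃ₗᵢ[ℝ] Euc N)) (σ : Euc N ≃ₗᵢ[ℝ] Euc N) : Prop :=
  ∀ L : ℕ, ∃ R : ℝ, ∀ x : Euc N, ∃ a : Euc N, (∀ g ∈ G, g a = a) ∧ σ a = a ∧
    ∀ r : ℝ, 0 < r → ‖x - a‖ ≤ R * r ∨ ∃ γ : Fin L → Euc N ≃ₗᵢ[ℝ] Euc N, (∀ i, γ i ∈ G) ∧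
      ∀ i j, i ≠ j → 2 * r ≤ dist (γ i x) (γ j x)

section
variable {G : Set (Euc N ≃ₗᵢ[ℝ] Euc N)} {σ : Euc N ≃ₗᵢ[ℝ] Euc N}

namespace Equivariant

lemma add (h : Subcritical N s) {u v : Euc N → ℝ} (hu : Equivariant N s G σ u)
    (hv : Equivariant N s G σ v) : Equivariant N s G σ (u + v) where
  hs := hu.hs.add h hv.hs
  inv g hg := (hu.inv g hg).add (hv.inv g hg)
  anti := by
    filter_upwards [hu.anti, hv.anti] with x h1 h2
    simp only [Function.comp_apply, Pi.neg_apply, Pi.add_apply] at *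
    rw [h1, h2]; ring

lemma smul (h : Subcritical N s) (c : ℝ) {u : Euc N → ℝ} (hu : Equivariant N s G σ u) :
    Equivariant N s G σ (c • u) where
  hs := hu.hs.smul h c
  inv g hg := (hu.inv g hg).const_smul c
  anti := by
    filter_upwards [hu.anti] with x h1
    simp only [Function.comp_apply, Pi.neg_apply, Pi.smul_apply, smul_eq_mul] at *
    rw [h1]; ring

lemma sub (h : Subcritical N s) {u v : Euc N → ℝ} (hu : Equivariant N s G σ u)
    (hv : Equivariant N s G σ v) : Equivariant N s G σ (u - v) := by
  have := hu.add h (hv.smul h (-1))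
  rwa [neg_one_smul, ← sub_eq_add_neg] at this

lemma dil (h : Subcritical N s) {u : Euc N → ℝ} (hu : Equivariant N s G σ u) {a : Euc N}
    (ha : ∀ g ∈ G, g a = a) (hσ : σ a = a) {r : ℝ} (hr : 0 < r) :
    Equivariant N s G σ (dil s a r u) where
  hs := hu.hs.dil h a hr
  inv g hg := by
    have h1 : FracSobolev.dil s a r u ∘ g = FracSobolev.dil s a r (u ∘ g) := by
      ext x; simp [FracSobolev.dil, ha g hg]
    rw [h1]; exact dil_ae (hu.inv g hg) a hr
  anti := by
    have h1 : FracSobolev.dil s a r u ∘ σ = FracSobolev.dil s a r (u ∘ σ) := by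
      ext x; simp [FracSobolev.dil, hσ]
    have h2 : -FracSobolev.dil s a r u = FracSobolev.dil s a r (-u) := by
      ext x; simp [FracSobolev.dil]
    rw [h1, h2]; exact dil_ae hu.anti a hr

lemma of_tendsto {w : ℕ → Euc N → ℝ} {w₀ : Euc N → ℝ} (hw : ∀ k, Equivariant N s G σ (w k))
    (hw₀ : Hs N s w₀) (hlim : ∀ᵐ x, Tendsto (fun k => w k x) atTop (𝓝 (w₀ x))) :
    Equivariant N s G σ w₀ where
  hs := hw₀
  inv g hg := by
    have h1 := g.measurePreserving.quasiMeasurePreserving.ae hlim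
    have h2 : ∀ᵐ x, ∀ k, w k (g x) = w k x := ae_all_iff.2 fun k => (hw k).inv g hg
    filter_upwards [hlim, h1, h2] with x h3 h4 h5
    simp only [h5] at h4
    exact tendsto_nhds_unique h4 h3
  anti := by
    have h1 := σ.measurePreserving.quasiMeasurePreserving.ae hlim
    have h2 : ∀ᵐ x, ∀ k, w k (σ x) = - w k x := ae_all_iff.2 fun k => (hw k).anti
    filter_upwards [hlim, h1, h2] with x h3 h4 h5
    simp only [h5] at h4
    exact tendsto_nhds_unique h4 h3.neg

lemma mass_orbit_le (h : Subcritical N s) {u : Euc N → ℝ} (hu : Equivariant N s G σ u) {x : Euc N}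
    {r : ℝ} (hr : 0 < r) {L : ℕ} {γ : Fin L → Euc N ≃ₗᵢ[ℝ] Euc N} (hγ : ∀ i, γ i ∈ G)
    (hd : ∀ i j, i ≠ j → 2 * r ≤ dist (γ i x) (γ j x)) :
    L * (ballVol N * (r ^ (((N : ℝ) - 2 * s) / 2) * |ballAvg u x r|) ^ twoStar N s) ≤
      critInt N s u := by
  have h1 : ∀ i, ballVol N * (r ^ (((N : ℝ) - 2 * s) / 2) * |ballAvg u x r|) ^ twoStar N s ≤
      ∫ y in Metric.ball (γ i x) r, |u y| ^ twoStar N s := fun i => by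
    have := ballAvg_mass_le h hu.hs (γ i x) hr
    rwa [← ballAvg_comp _ _ _ hr, ballAvg_congr (hu.inv _ (hγ i))] at this
  have hdisj : Pairwise (Function.onFun Disjoint fun i => Metric.ball (γ i x) r) :=
    fun i j hij => Metric.ball_disjoint_ball (by have := hd i j hij; linarith)
  calc _ = ∑ _i : Fin L,
          ballVol N * (r ^ (((N : ℝ) - 2 * s) / 2) * |ballAvg u x r|) ^ twoStar N s := by simp
    _ ≤ ∑ i : Fin L, ∫ y in Metric.ball (γ i x) r, |u y| ^ twoStar N s :=
        Finset.sum_le_sum fun i _ => h1 i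
    _ = ∫ y in ⋃ i, Metric.ball (γ i x) r, |u y| ^ twoStar N s :=
        (integral_iUnion_fintype (fun _ => measurableSet_ball) hdisj
          fun i => hu.hs.lp.integrableOn).symm
    _ ≤ critInt N s u := setIntegral_le_integral hu.hs.lp (ae_of_all _ fun y => by positivity)

end Equivariant

/-- Equivariant functions with non-negligible critical integral concentrate, after rescaling, in a
fixed compact set. -/
theorem exists_rescaling (h : Subcritical N s) (hO : LargeOrbits G σ) {δ : ℝ} (hδ : 0 < δ) :
    ∃ c > 0, ∀ u, Equivariant N s G σ u → gagSq N s u = 1 → δ ≤ critInt N s u →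
      ∃ w, Equivariant N s G σ w ∧ gagSq N s w = 1 ∧ critInt N s w = critInt N s u ∧
        c ≤ ∫ x, weight N x * w x ^ 2 := by
  have hω := ballVol_pos (N := N)
  have hp := h.two_lt
  obtain ⟨C, hC0, hC⟩ := exists_sobolev h
  set p := twoStar N s
  obtain ⟨M, hM, hMδ⟩ : ∃ M, 0 < M ∧ 4 * (ballVol N)⁻¹ * (2 * M) ^ (p - 2) < δ := by
    refine ⟨(δ * ballVol N / 8) ^ (1 / (p - 2)) / 2, by positivity, ?_⟩
    rw [mul_div_cancel₀ _ two_ne_zero, ← rpow_mul (by positivity),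
      one_div_mul_cancel (by linarith), rpow_one]
    field_simp
    linarith
  obtain ⟨L, hL⟩ := exists_nat_gt (C / (ballVol N * M ^ p))
  rw [div_lt_iff₀ (by positivity)] at hL
  obtain ⟨R, hR⟩ := hO L
  set c := (1 + (|R| + 1)) ^ (-((N : ℝ) + 1)) with hc
  have hc0 : 0 < c := by positivity
  refine ⟨c * (M ^ 2 * ballVol N), by positivity, fun u hu hu1 hδu => ?_⟩
  obtain ⟨x, r, hr, hxr⟩ : ∃ x r, 0 < r ∧ M < r ^ (((N : ℝ) - 2 * s) / 2) * |ballAvg u x r| := by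
    by_contra! hcon
    have := critInt_le_of_ballAvg_le h hu.hs hM hcon
    rw [hu1, mul_one] at this
    linarith
  obtain ⟨a, haG, haσ, hax⟩ := hR x
  have hxa : ‖x - a‖ ≤ R * r := by
    refine (hax r hr).resolve_right ?_
    rintro ⟨γ, hγ, hd⟩
    have h1 := hu.mass_orbit_le h hr hγ hd
    have h2 := hC u hu.hs
    rw [hu1, one_rpow, mul_one] at h2
    have h3 : (L : ℝ) * (ballVol N * M ^ p) ≤
        L * (ballVol N * (r ^ (((N : ℝ) - 2 * s) / 2) * |ballAvg u x r|) ^ p) := by gcongr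
    linarith
  have hw := hu.dil h haG haσ hr
  refine ⟨_, hw, (gagSq_dil hr u).trans hu1, critInt_dil h hr u, ?_⟩
  set w := dil s a r u
  set y := r⁻¹ • (x - a)
  have hy : ‖y‖ ≤ |R| := by
    rw [norm_smul, norm_inv, norm_of_nonneg hr.le, inv_mul_le_iff₀ hr, mul_comm]
    exact hxa.trans (by gcongr; exact le_abs_self R)
  have hay : a + r • y = x := by rw [smul_inv_smul₀ hr.ne']; abel
  have hav : M ^ 2 ≤ ballAvg w y 1 ^ 2 := by
    rw [ballAvg_dil hr, hay, ← sq_abs (_ * _), abs_mul, abs_of_pos (rpow_pos_of_pos hr _)]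
    gcongr
  have hi := integrable_weight_mul_sq h hw.hs
  have hcw : ∀ z ∈ Metric.ball y 1, c * w z ^ 2 ≤ weight N z * w z ^ 2 := fun z hz => by
    gcongr
    refine le_weight_of_norm_le ?_
    have h1 : ‖z - y‖ < 1 := by rwa [← dist_eq_norm]
    have h2 := norm_add_le (z - y) y
    rw [sub_add_cancel] at h2
    linarith
  have hiB : IntegrableOn (fun z => w z ^ 2) (Metric.ball y 1) := by
    have : IntegrableOn (fun z => c⁻¹ * (weight N z * w z ^ 2)) (Metric.ball y 1) :=
      (hi.const_mul c⁻¹).integrableOn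
    refine Integrable.mono' this (hw.hs.meas.pow_const 2).aestronglyMeasurable ?_
    filter_upwards [ae_restrict_mem measurableSet_ball] with z hz
    rw [norm_of_nonneg (sq_nonneg _), le_inv_mul_iff₀ hc0]
    exact hcw z hz
  have hj := abs_ballAvg_rpow_le h hw.hs y one_pos (q := 2) one_le_two (by simpa using hiB)
  simp only [rpow_two, sq_abs, one_pow, one_mul] at hj
  rw [le_inv_mul_iff₀ hω] at hj
  calc c * (M ^ 2 * ballVol N) ≤ c * ∫ z in Metric.ball y 1, w z ^ 2 := by
        gcongr
        refine le_trans ?_ hj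
        rw [mul_comm]; gcongr
    _ = ∫ z in Metric.ball y 1, c * w z ^ 2 := (integral_const_mul _ _).symm
    _ ≤ ∫ z in Metric.ball y 1, weight N z * w z ^ 2 :=
        setIntegral_mono_on (hiB.const_mul c) hi.integrableOn measurableSet_ball hcw
    _ ≤ _ := setIntegral_le_integral hi
        (ae_of_all _ fun z => mul_nonneg (weight_pos z).le (sq_nonneg _))

end

end

section

variable {N : ℕ} {s : ℝ} {G : Set (Euc N ≃ₗᵢ[ℝ] Euc N)} {σ : Euc N ≃ₗᵢ[ℝ] Euc N}

/-- The best constant for the Sobolev inequality among equivariant functions is approached by a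
normalized sequence. -/
lemma exists_maximizing_seq (h : Subcritical N s)
    (hne : ∃ u, Equivariant N s G σ u ∧ 0 < critInt N s u) :
    ∃ S > 0, (∀ u, Equivariant N s G σ u → critInt N s u ≤ S * gagSq N s u ^ (twoStar N s / 2)) ∧
      ∃ u : ℕ → Euc N → ℝ, (∀ k, Equivariant N s G σ (u k)) ∧ (∀ k, gagSq N s (u k) = 1) ∧
        Tendsto (fun k => critInt N s (u k)) atTop (𝓝 S) := by
  obtain ⟨C, hC0, hC⟩ := exists_sobolev h
  have hp := h.two_lt
  set A : Set ℝ := {t | ∃ u, Equivariant N s G σ u ∧ gagSq N s u = 1 ∧ critInt N s u = t} with hA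
  have hbdd : BddAbove A := by
    refine ⟨C, ?_⟩
    rintro t ⟨u, hu, h1, rfl⟩
    have := hC u hu.hs
    rwa [h1, one_rpow, mul_one] at this
  have hnorm : ∀ u, Equivariant N s G σ u → 0 < gagSq N s u →
      critInt N s u / gagSq N s u ^ (twoStar N s / 2) ∈ A := fun u hu hpos => by
    refine ⟨(√(gagSq N s u))⁻¹ • u, hu.smul h _, ?_, ?_⟩
    · rw [gagSq_smul, inv_pow, sq_sqrt hpos.le, inv_mul_cancel₀ hpos.ne']
    · rw [critInt_smul, abs_of_nonneg (by positivity), sqrt_eq_rpow, ← rpow_neg hpos.le,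
        ← rpow_mul hpos.le, div_eq_inv_mul (critInt N s u), ← rpow_neg hpos.le]
      congr 2; ring
  have hpos : ∀ u, Equivariant N s G σ u → 0 < critInt N s u → 0 < gagSq N s u :=
    fun u hu h0 => lt_of_le_of_ne (gagSq_nonneg u) fun h' =>
      h0.ne' (critInt_eq_zero_of_gagSq_eq_zero h hu.hs h'.symm)
  obtain ⟨u₀, hu₀, hu₀pos⟩ := hne
  have h0 := hpos u₀ hu₀ hu₀pos
  have hmem := hnorm u₀ hu₀ h0
  have hS : 0 < sSup A := lt_of_lt_of_le (by positivity) (le_csSup hbdd hmem)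
  refine ⟨sSup A, hS, fun u hu => ?_, ?_⟩
  · rcases (critInt_nonneg (s := s) u).eq_or_lt with h1 | h1
    · rw [← h1]; have := gagSq_nonneg (s := s) u; positivity
    · have h2 := hpos u hu h1
      rw [← div_le_iff₀ (by positivity)]
      exact le_csSup hbdd (hnorm u hu h2)
  · obtain ⟨t, -, ht, htA⟩ := exists_seq_tendsto_sSup ⟨_, hmem⟩ hbdd
    choose u hu h1 h2 using htA
    exact ⟨u, hu, h1, by simpa only [h2] using ht⟩

lemma eq_of_forall_mul_le {c g S Q : ℝ} (hS : 0 ≤ S) (hQ : 0 ≤ Q)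
    (H : ∀ t : ℝ, S + t * c ≤ S * (1 + t * g + t ^ 2 * Q / 2)) : c = S * g := by
  set d := c - S * g with hd
  set K := S * Q with hK
  have hK0 : 0 ≤ K := by positivity
  have h1 : ∀ t : ℝ, t * d ≤ t ^ 2 * K / 2 := fun t => by
    have := H t
    rw [hd, hK]; nlinarith
  have h2 := h1 (d / (K + 1))
  have : d ^ 2 = 0 := by
    refine le_antisymm ?_ (sq_nonneg d)
    rw [div_mul_eq_mul_div, div_pow, div_mul_eq_mul_div, div_div, div_le_div_iff₀ (by positivity)
      (by positivity)] at h2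
    have h3 : d ^ 2 * (K + 1) ^ 2 * 2 ≤ d ^ 2 * K * (K + 1) := by nlinarith
    by_contra! hcon
    have h4 : 0 < d ^ 2 * ((K + 1) ^ 2 * 2 - K * (K + 1)) := by
      have : 0 < (K + 1) ^ 2 * 2 - K * (K + 1) := by nlinarith
      positivity
    nlinarith
  have : d = 0 := by simpa using this
  linarith

/-- The critical pairing is at most the one of an equivariant maximizer. -/
lemma critPair_le_of_equivariant (h : Subcritical N s) {S : ℝ} (hS : 0 < S)
    (hmax : ∀ u, Equivariant N s G σ u → critInt N s u ≤ S * gagSq N s u ^ (twoStar N s / 2))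
    {w v : Euc N → ℝ} (hw : Equivariant N s G σ w) (hw1 : gagSq N s w = 1)
    (hv : Equivariant N s G σ v) : critPair N s w v ≤ S * ((1 + gagSq N s v) / 2) := by
  have hp := h.two_lt
  have h1 := (le_abs_self _).trans (abs_critPair_le h hw.hs hv.hs)
  have h2 := hmax w hw
  have h3 := hmax v hv
  rw [hw1, one_rpow, mul_one] at h2
  have hg := gagSq_nonneg (s := s) v
  set p := twoStar N s
  have hp0 : 0 < p := by linarith
  have h4 : critInt N s w ^ ((p - 1) / p) ≤ S ^ ((p - 1) / p) :=
    rpow_le_rpow (critInt_nonneg _) h2 (div_nonneg (by linarith) hp0.le)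
  have h5 : critInt N s v ^ (1 / p) ≤ S ^ (1 / p) * √(gagSq N s v) := by
    refine (rpow_le_rpow (critInt_nonneg _) h3 (by positivity)).trans_eq ?_
    rw [mul_rpow hS.le (by positivity), ← rpow_mul hg, sqrt_eq_rpow]
    congr 2; field_simp
  have h6 : √(gagSq N s v) ≤ (1 + gagSq N s v) / 2 := by
    nlinarith [sq_sqrt hg, sq_nonneg (√(gagSq N s v) - 1)]
  calc _ ≤ _ := h1
    _ ≤ S ^ ((p - 1) / p) * (S ^ (1 / p) * √(gagSq N s v)) :=
        mul_le_mul h4 h5 (rpow_nonneg (critInt_nonneg _) _) (by positivity)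
    _ = S * √(gagSq N s v) := by
        rw [← mul_assoc, ← rpow_add hS]
        congr 1
        rw [← add_div, sub_add_cancel, div_self hp0.ne', rpow_one]
    _ ≤ _ := by gcongr

/-- A constrained critical point among equivariant functions. -/
lemma exists_equivariant_critical (h : Subcritical N s) (hO : LargeOrbits G σ)
    (hne : ∃ u, Equivariant N s G σ u ∧ 0 < critInt N s u) :
    ∃ S > 0, ∃ w, Equivariant N s G σ w ∧ 0 < critInt N s w ∧
      ∀ φ, Equivariant N s G σ φ → critPair N s w φ = S * gagInner N s w φ := by
  obtain ⟨S, hS, hmax, u, hu, hu1, hlim⟩ := exists_maximizing_seq h hne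
  obtain ⟨c, hc, hresc⟩ := exists_rescaling (G := G) (σ := σ) h hO (half_pos hS)
  obtain ⟨k₀, hk₀⟩ := eventually_atTop.1 ((tendsto_order.1 hlim).1 (S / 2) (by linarith))
  choose w hw hw1 hwS hwc using fun k =>
    hresc (u (k + k₀)) (hu _) (hu1 _) (hk₀ _ (Nat.le_add_left _ _)).le
  have hwlim : Tendsto (fun k => critInt N s (w k)) atTop (𝓝 S) := by
    simp only [hwS]
    exact (tendsto_add_atTop_iff_nat k₀).2 hlim
  obtain ⟨w₀, φ, hw₀, hφ, hweak⟩ :=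
    exists_weak_limit h (fun k => (hw k).hs) fun k => (hw1 k).le
  have hL2 := tendsto_weighted_sq h (fun k => (hw (φ k)).hs) (fun k => (hw1 _).le) hw₀ hweak
  obtain ⟨ψ, hψ, hae⟩ := exists_ae_tendsto_of_weighted_sq h (fun k => (hw (φ k)).hs) hw₀ hL2
  have hw₀e : Equivariant N s G σ w₀ := Equivariant.of_tendsto (fun k => hw (φ (ψ k))) hw₀ hae
  refine ⟨S, hS, w₀, hw₀e, ?_, fun v hv => ?_⟩
  · refine lt_of_le_of_ne (critInt_nonneg _) fun h0 => ?_
    have hz := ae_eq_zero_of_critInt_eq_zero h hw₀ h0.symm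
    have : ∀ k, c ≤ ∫ x, weight N x * (w (φ k) x - w₀ x) ^ 2 := fun k => by
      refine (hwc (φ k)).trans_eq (integral_congr_ae ?_)
      filter_upwards [hz] with x hx
      simp [hx]
    have := ge_of_tendsto' hL2 this
    linarith
  · have hθ : Tendsto (fun k => φ (ψ k)) atTop atTop := hφ.tendsto_atTop.comp hψ.tendsto_atTop
    have hB : ∀ k, critInt N s (w (φ (ψ k))) ≤ S := fun k => by
      have := hmax _ (hw (φ (ψ k)))
      rwa [hw1, one_rpow, mul_one] at this
    have hcp := tendsto_critPair h (fun k => (hw (φ (ψ k))).hs) hw₀ hv.hs hB hae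
    have hgi := (hweak v hv.hs).comp hψ.tendsto_atTop
    refine eq_of_forall_mul_le hS.le (gagSq_nonneg (s := s) v) fun t => ?_
    have hl : Tendsto (fun k => critInt N s (w (φ (ψ k))) + t * critPair N s (w (φ (ψ k))) v) atTop
        (𝓝 (S + t * critPair N s w₀ v)) := (hwlim.comp hθ).add (hcp.const_mul t)
    have hr : Tendsto (fun k => S * (1 + t * gagInner N s (w (φ (ψ k))) v +
        t ^ 2 * gagSq N s v / 2)) atTop
        (𝓝 (S * (1 + t * gagInner N s w₀ v + t ^ 2 * gagSq N s v / 2))) :=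
      (((hgi.const_mul t).const_add 1).add_const _).const_mul S
    refine le_of_tendsto_of_tendsto' hl hr fun k => ?_
    set z := w (φ (ψ k))
    have hz : Equivariant N s G σ z := hw _
    have h1 := critPair_le_of_equivariant h hS hmax hz (hw1 _) (hz.add h (hv.smul h t))
    rw [critPair_add h hz.hs hz.hs (hv.hs.smul h t), critPair_smul, critPair_self h,
      gagSq_add h hz.hs (hv.hs.smul h t), gagSq_smul, gagInner_comm, gagInner_smul_left,
      gagInner_comm v z, hw1] at h1
    refine h1.trans_eq ?_
    ring

/-- The principle of symmetric criticality. -/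
lemma critPair_eq_of_equivariant (h : Subcritical N s) {S : ℝ} {w : Euc N → ℝ}
    (hw : Equivariant N s G σ w)
    (hcrit : ∀ φ, Equivariant N s G σ φ → critPair N s w φ = S * gagInner N s w φ)
    {v : Euc N → ℝ} (hv : Hs N s v) : critPair N s w v = S * gagInner N s w v := by
  have hp := h.two_lt
  obtain ⟨C, hC0, hC⟩ := exists_sobolev h
  obtain ⟨f, hf, hrep⟩ := exists_riesz h (critPair N s w)
    (K := critInt N s w ^ ((twoStar N s - 1) / twoStar N s) * C ^ (1 / twoStar N s))
    (fun u v hu hv => critPair_add h hw.hs hu hv) (fun c u _ => critPair_smul c w u) fun u hu => by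
      refine (abs_critPair_le h hw.hs hu).trans ?_
      rw [mul_assoc]
      have hg := gagSq_nonneg (s := s) u
      have := critInt_nonneg (s := s) w
      gcongr
      refine (rpow_le_rpow (critInt_nonneg _) (hC u hu) (by have := h.twoStar_pos; positivity)).trans_eq ?_
      rw [mul_rpow hC0.le (by positivity), ← rpow_mul hg, sqrt_eq_rpow]
      congr 2
      have := h.twoStar_pos
      field_simp
  have hcomp : ∀ (g : Euc N ≃ₗᵢ[ℝ] Euc N) (v : Euc N → ℝ), Hs N s v →
      gagInner N s (f ∘ g) v = critPair N s (w ∘ g) v := fun g v hv => by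
    have h1 : v = (v ∘ g.symm) ∘ g := by ext x; simp
    rw [h1, gagInner_comp, critPair_comp, ← hrep _ (hv.comp g.symm h)]
  have hfe : Equivariant N s G σ f := by
    refine ⟨hf, fun g hg => ?_, ?_⟩
    · have hv := (hf.comp g h).sub h hf
      refine ae_eq_of_gagInner_eq h (hf.comp g h) hf ?_
      rw [hcomp g _ hv, ← hrep _ hv, critPair_congr (hw.inv g hg) (ae_eq_refl _)]
    · have hf' : Hs N s (-f) := by rw [← neg_one_smul ℝ f]; exact hf.smul h _
      have hv := (hf.comp σ h).sub h hf'
      refine ae_eq_of_gagInner_eq h (hf.comp σ h) hf' ?_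
      rw [hcomp σ _ hv, critPair_congr hw.anti (ae_eq_refl _), ← neg_one_smul ℝ f, gagInner_smul_left,
        neg_one_smul, ← hrep _ hv]
      simp [critPair, integral_neg]
  have hd := hfe.sub h (hw.smul h S)
  have hfw := ae_eq_of_gagInner_eq h hf (hw.hs.smul h S) (by
    rw [← hrep _ hd.hs, hcrit _ hd, gagInner_smul_left])
  rw [hrep v hv, gagInner_congr hfw (ae_eq_refl v), gagInner_smul_left]

/-- Existence of an equivariant solution of the critical equation. -/
theorem exists_equivariant_solution (h : Subcritical N s) (hO : LargeOrbits G σ)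
    (hne : ∃ u, Equivariant N s G σ u ∧ 0 < critInt N s u) :
    ∃ w, Equivariant N s G σ w ∧ 0 < critInt N s w ∧
      ∀ v, Hs N s v → gagInner N s w v = critPair N s w v := by
  obtain ⟨S, hS, w, hw, hwpos, hcrit⟩ := exists_equivariant_critical h hO hne
  have hp := h.two_lt
  set c := S ^ (-(1 / (twoStar N s - 2))) with hc
  have hc0 : 0 < c := by positivity
  have hcS : c ^ (twoStar N s - 1) * S = c := by
    have : twoStar N s - 1 = (twoStar N s - 2) + 1 := by ring
    have h2 : c ^ (twoStar N s - 2) = S⁻¹ := by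
      rw [hc, ← rpow_mul hS.le, ← rpow_neg_one]; congr 1
      have : twoStar N s - 2 ≠ 0 := by linarith
      field_simp
    rw [this, rpow_add_one hc0.ne', h2]
    field_simp
  refine ⟨c • w, hw.smul h c, ?_, fun v hv => ?_⟩
  · rw [critInt_smul]
    have := abs_pos.2 hc0.ne'
    positivity
  · rw [critPair_smul_left hc0, critPair_eq_of_equivariant h hw hcrit hv, gagInner_smul_left,
      ← mul_assoc, hcS]

end

section

variable {N : ℕ} {s : ℝ}

/-- A kernel dominating the Gagliardo integrand of bounded Lipschitz functions. -/
def kernel (N : ℕ) (s : ℝ) (z : Euc N) : ℝ := min (‖z‖ ^ 2) 1 / ‖z‖ ^ ((N : ℝ) + 2 * s)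

lemma kernel_nonneg (z : Euc N) : 0 ≤ kernel N s z := by unfold kernel; positivity

lemma integrable_kernel (hN : 0 < N) (hs0 : 0 < s) (hs1 : s < 1) : Integrable (kernel N s) := by
  have : Nonempty (Fin N) := ⟨⟨0, hN⟩⟩
  unfold kernel
  rw [integrable_fun_norm_addHaar volume
    (f := fun r : ℝ => min (r ^ 2) 1 / r ^ ((N : ℝ) + 2 * s))]
  have hN1 : ((N - 1 : ℕ) : ℝ) = (N : ℝ) - 1 := by rw [Nat.cast_sub hN]; simp
  have hN1' : ∀ r : ℝ, r ^ (N - 1) = r ^ ((N : ℝ) - 1) := fun r => by rw [← hN1, rpow_natCast]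
  rw [← Set.Ioc_union_Ioi_eq_Ioi zero_le_one]
  refine IntegrableOn.union ?_ ?_
  · have h1 : IntegrableOn (fun r : ℝ => r ^ (1 - 2 * s)) (Set.Ioc 0 1) :=
      (intervalIntegral.intervalIntegrable_rpow' (by linarith)).1
    refine h1.congr_fun (fun r hr => ?_) measurableSet_Ioc
    have hr0 := hr.1
    have : min (r ^ 2) 1 = r ^ (2 : ℝ) := by
      rw [rpow_two]; exact min_eq_left (pow_le_one₀ hr.1.le hr.2)
    simp only [finrank_euclideanSpace, Fintype.card_fin, smul_eq_mul]
    rw [this, hN1', ← rpow_sub hr0, ← rpow_add hr0]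
    congr 1; ring
  · have h1 : IntegrableOn (fun r : ℝ => r ^ (-1 - 2 * s)) (Set.Ioi 1) :=
      integrableOn_Ioi_rpow_of_lt (by linarith) one_pos
    refine h1.congr_fun (fun r hr => ?_) measurableSet_Ioi
    have hr1 : 1 < r := hr
    have hr0 : 0 < r := one_pos.trans hr1
    have : min (r ^ 2) 1 = r ^ (0 : ℝ) := by
      rw [rpow_zero]; exact min_eq_right (one_le_pow₀ hr1.le)
    simp only [finrank_euclideanSpace, Fintype.card_fin, smul_eq_mul]
    rw [this, hN1', ← rpow_sub hr0, ← rpow_add hr0]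
    congr 1; ring

lemma gagFinite_of_lipschitz (hN : 0 < N) (hs0 : 0 < s) (hs1 : s < 1) {u : Euc N → ℝ}
    {C : NNReal} (hu : LipschitzWith C u) {M : ℝ} (hM : ∀ x, |u x| ≤ M)
    (hsupp : HasCompactSupport u) : GagFinite N s u := by
  set B := tsupport u
  have hBm : MeasurableSet B := (isClosed_tsupport u).measurableSet
  have hB : Integrable (B.indicator fun _ => (1 : ℝ)) :=
    (integrable_indicator_iff hBm).2 (integrableOn_const (hsupp.isCompact.measure_lt_top.ne))
  have hK := integrable_kernel hN hs0 hs1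
  have h1 : Integrable fun p : Euc N × Euc N =>
      B.indicator (fun _ => (1 : ℝ)) p.2 * kernel N s (p.1 - p.2) :=
    hB.convolution_integrand (ContinuousLinearMap.mul ℝ ℝ) hK
  have h2 : Integrable fun p : Euc N × Euc N =>
      B.indicator (fun _ => (1 : ℝ)) p.1 * kernel N s (p.2 - p.1) := h1.swap
  have hm : Measurable fun p : Euc N × Euc N =>
      (u p.1 - u p.2) ^ 2 / dist p.1 p.2 ^ ((N : ℝ) + 2 * s) := by
    have := hu.continuous.measurable
    fun_prop
  refine ((h1.add h2).const_mul ((C : ℝ) ^ 2 + (2 * M) ^ 2)).mono' hm.aestronglyMeasurable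
    (ae_of_all _ fun p => ?_)
  have hsym : kernel N s (p.2 - p.1) = kernel N s (p.1 - p.2) := by
    simp only [kernel, norm_sub_rev p.2 p.1]
  simp only [Pi.add_apply]
  rw [hsym, ← add_mul, norm_of_nonneg (by positivity)]
  have hk0 := kernel_nonneg (s := s) (p.1 - p.2)
  by_cases hz : u p.1 = 0 ∧ u p.2 = 0
  · rw [hz.1, hz.2]
    have h3 : ∀ x : Euc N, 0 ≤ B.indicator (fun _ => (1 : ℝ)) x :=
      fun x => Set.indicator_nonneg (fun _ _ => zero_le_one) x
    have h4 := h3 p.1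
    have h5 := h3 p.2
    simp only [sub_self, ne_eq, OfNat.ofNat_ne_zero, not_false_eq_true, zero_pow, zero_div]
    positivity
  have hind : 1 ≤ B.indicator (fun _ => (1 : ℝ)) p.2 + B.indicator (fun _ => (1 : ℝ)) p.1 := by
    have h3 : ∀ x : Euc N, 0 ≤ B.indicator (fun _ => (1 : ℝ)) x :=
      fun x => Set.indicator_nonneg (fun _ _ => zero_le_one) x
    have h4 : ∀ x : Euc N, u x ≠ 0 → B.indicator (fun _ => (1 : ℝ)) x = 1 := fun x hx =>
      Set.indicator_of_mem (subset_tsupport u hx) _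
    by_cases h5 : u p.1 = 0
    · rw [h4 p.2 fun h6 => hz ⟨h5, h6⟩]; linarith [h3 p.1]
    · rw [h4 p.1 h5]; linarith [h3 p.2]
  have hsq : (u p.1 - u p.2) ^ 2 ≤
      ((C : ℝ) ^ 2 + (2 * M) ^ 2) * min (‖p.1 - p.2‖ ^ 2) 1 := by
    have ha : (u p.1 - u p.2) ^ 2 ≤ (C : ℝ) ^ 2 * ‖p.1 - p.2‖ ^ 2 := by
      rw [← sq_abs, ← mul_pow]
      have := hu.dist_le_mul p.1 p.2
      rw [dist_eq_norm, dist_eq_norm, norm_eq_abs] at this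
      gcongr
    have hb : (u p.1 - u p.2) ^ 2 ≤ (2 * M) ^ 2 := by
      rw [← sq_abs]
      have := abs_sub (u p.1) (u p.2)
      have h3 := hM p.1
      have h4 := hM p.2
      gcongr
      linarith
    rcases min_choice (‖p.1 - p.2‖ ^ 2) 1 with h3 | h3
    · rw [h3]; nlinarith [sq_nonneg (2 * M), sq_nonneg ‖p.1 - p.2‖, mul_nonneg (sq_nonneg (2 * M)) (sq_nonneg ‖p.1 - p.2‖)]
    · rw [h3]; nlinarith [sq_nonneg (C : ℝ)]
  calc _ ≤ ((C : ℝ) ^ 2 + (2 * M) ^ 2) * kernel N s (p.1 - p.2) := by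
        rw [kernel, dist_eq_norm, ← mul_div_assoc]; gcongr
    _ ≤ _ := by
        gcongr
        exact le_mul_of_one_le_left hk0 hind

/-- Test functions belong to `Ḣ^s(ℝ^N)`. -/
lemma hs_of_contDiff (hN : 0 < N) (hs0 : 0 < s) (hs1 : s < 1) (h : Subcritical N s)
    {u : Euc N → ℝ} (hu : ContDiff ℝ 1 u) (hsupp : HasCompactSupport u) : Hs N s u := by
  obtain ⟨C, hC⟩ := hu.lipschitzWith_of_hasCompactSupport hsupp one_ne_zero
  obtain ⟨M, hM⟩ := hu.continuous.bounded_above_of_compact_support hsupp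
  refine ⟨hu.continuous.measurable, ?_, gagFinite_of_lipschitz hN hs0 hs1 hC hM hsupp, by simp⟩
  refine Continuous.integrable_of_hasCompactSupport
    (hu.continuous.abs.rpow_const fun _ => Or.inr h.twoStar_pos.le) ?_
  exact hsupp.comp_left (g := fun t : ℝ => |t| ^ twoStar N s)
    (by simp [zero_rpow h.twoStar_pos.ne'])

end

section

variable {k : ℕ} {s : ℝ}

/-- Replace the first four coordinates of `x` by `y`. -/
def setHead (x : Euc (k + 4)) (y0 y1 y2 y3 : ℝ) : Euc (k + 4) :=
  WithLp.toLp 2 (Fin.cons y0 (Fin.cons y1 (Fin.cons y2 (Fin.cons y3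
    fun i : Fin k => x i.succ.succ.succ.succ))))

/-- The first coordinate. -/
def hd0 (x : Euc (k + 4)) : ℝ := x 0
/-- The second coordinate. -/
def hd1 (x : Euc (k + 4)) : ℝ := x (Fin.succ 0)
/-- The third coordinate. -/
def hd2 (x : Euc (k + 4)) : ℝ := x (Fin.succ (Fin.succ 0))
/-- The fourth coordinate. -/
def hd3 (x : Euc (k + 4)) : ℝ := x (Fin.succ (Fin.succ (Fin.succ 0)))

lemma norm_sq_eq_head (x : Euc (k + 4)) : ‖x‖ ^ 2 =
    hd0 x ^ 2 + hd1 x ^ 2 + hd2 x ^ 2 + hd3 x ^ 2 + ∑ i : Fin k, x i.succ.succ.succ.succ ^ 2 := by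
  rw [EuclideanSpace.real_norm_sq_eq]
  simp only [Fin.sum_univ_succ, hd0, hd1, hd2, hd3]
  ring

section
variable (x : Euc (k + 4)) (y0 y1 y2 y3 : ℝ)
@[simp] lemma hd0_setHead : hd0 (setHead x y0 y1 y2 y3) = y0 := rfl
@[simp] lemma hd1_setHead : hd1 (setHead x y0 y1 y2 y3) = y1 := rfl
@[simp] lemma hd2_setHead : hd2 (setHead x y0 y1 y2 y3) = y2 := rfl
@[simp] lemma hd3_setHead : hd3 (setHead x y0 y1 y2 y3) = y3 := rfl
@[simp] lemma tail_setHead (i : Fin k) :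
    setHead x y0 y1 y2 y3 i.succ.succ.succ.succ = x i.succ.succ.succ.succ := rfl
end

lemma ext_head {x y : Euc (k + 4)} (h0 : hd0 x = hd0 y) (h1 : hd1 x = hd1 y) (h2 : hd2 x = hd2 y)
    (h3 : hd3 x = hd3 y) (ht : ∀ i : Fin k, x i.succ.succ.succ.succ = y i.succ.succ.succ.succ) :
    x = y := by
  ext i
  refine Fin.cases h0 (fun i => ?_) i
  refine Fin.cases h1 (fun i => ?_) i
  refine Fin.cases h2 (fun i => ?_) i
  exact Fin.cases h3 ht i

@[simp] lemma hd0_add (x y : Euc (k + 4)) : hd0 (x + y) = hd0 x + hd0 y := rfl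
@[simp] lemma hd1_add (x y : Euc (k + 4)) : hd1 (x + y) = hd1 x + hd1 y := rfl
@[simp] lemma hd2_add (x y : Euc (k + 4)) : hd2 (x + y) = hd2 x + hd2 y := rfl
@[simp] lemma hd3_add (x y : Euc (k + 4)) : hd3 (x + y) = hd3 x + hd3 y := rfl
@[simp] lemma hd0_sub (x y : Euc (k + 4)) : hd0 (x - y) = hd0 x - hd0 y := rfl
@[simp] lemma hd1_sub (x y : Euc (k + 4)) : hd1 (x - y) = hd1 x - hd1 y := rfl
@[simp] lemma hd2_sub (x y : Euc (k + 4)) : hd2 (x - y) = hd2 x - hd2 y := rfl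
@[simp] lemma hd3_sub (x y : Euc (k + 4)) : hd3 (x - y) = hd3 x - hd3 y := rfl
@[simp] lemma hd0_smul (c : ℝ) (x : Euc (k + 4)) : hd0 (c • x) = c * hd0 x := rfl
@[simp] lemma hd1_smul (c : ℝ) (x : Euc (k + 4)) : hd1 (c • x) = c * hd1 x := rfl
@[simp] lemma hd2_smul (c : ℝ) (x : Euc (k + 4)) : hd2 (c • x) = c * hd2 x := rfl
@[simp] lemma hd3_smul (c : ℝ) (x : Euc (k + 4)) : hd3 (c • x) = c * hd3 x := rfl

/-- Simultaneous rotation in the first two and the next two coordinates. -/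
def rotFun (a b : ℝ) (x : Euc (k + 4)) : Euc (k + 4) :=
  setHead x (a * hd0 x - b * hd1 x) (b * hd0 x + a * hd1 x)
    (a * hd2 x - b * hd3 x) (b * hd2 x + a * hd3 x)

/-- Exchange of the first two coordinates with the next two. -/
def swapFun (x : Euc (k + 4)) : Euc (k + 4) := setHead x (hd2 x) (hd3 x) (hd0 x) (hd1 x)

/-- `rotFun` as a linear isometry. -/
def rot (a b : ℝ) (hab : a ^ 2 + b ^ 2 = 1) : Euc (k + 4) ≃ₗᵢ[ℝ] Euc (k + 4) :=
  LinearIsometry.toLinearIsometryEquiv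
    { toFun := rotFun a b
      map_add' := fun x y => by
        apply ext_head <;> simp [rotFun] <;> ring
      map_smul' := fun c x => by
        apply ext_head <;> simp [rotFun] <;> ring
      norm_map' := fun x => by
        rw [← sq_eq_sq₀ (norm_nonneg _) (norm_nonneg _)]
        change ‖rotFun a b x‖ ^ 2 = _
        simp only [norm_sq_eq_head, rotFun, hd0_setHead, hd1_setHead, hd2_setHead, hd3_setHead,
          tail_setHead]
        linear_combination (hd0 x ^ 2 + hd1 x ^ 2 + hd2 x ^ 2 + hd3 x ^ 2) * hab } rfl

/-- `swapFun` as a linear isometry. -/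
def swap : Euc (k + 4) ≃ₗᵢ[ℝ] Euc (k + 4) :=
  LinearIsometry.toLinearIsometryEquiv
    { toFun := swapFun
      map_add' := fun x y => by apply ext_head <;> simp [swapFun]
      map_smul' := fun c x => by apply ext_head <;> simp [swapFun]
      norm_map' := fun x => by
        rw [← sq_eq_sq₀ (norm_nonneg _) (norm_nonneg _)]
        change ‖swapFun x‖ ^ 2 = _
        simp only [norm_sq_eq_head, swapFun, hd0_setHead, hd1_setHead, hd2_setHead, hd3_setHead,
          tail_setHead]
        ring } rfl

@[simp] lemma rot_apply (a b : ℝ) (hab : a ^ 2 + b ^ 2 = 1) (x : Euc (k + 4)) :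
    rot a b hab x = rotFun a b x := rfl

@[simp] lemma swap_apply (x : Euc (k + 4)) : swap x = swapFun x := rfl

/-- The circle group of simultaneous rotations. -/
def rotations (k : ℕ) : Set (Euc (k + 4) ≃ₗᵢ[ℝ] Euc (k + 4)) :=
  {g | ∃ a b, ∃ hab : a ^ 2 + b ^ 2 = 1, g = rot a b hab}

lemma norm_rot_sub_rot (a b a' b' : ℝ) (x : Euc (k + 4)) :
    |a - a'| * ‖x - setHead x 0 0 0 0‖ ≤ ‖rotFun a b x - rotFun a' b' x‖ := by
  rw [← sq_le_sq₀ (by positivity) (norm_nonneg _), mul_pow, sq_abs, norm_sq_eq_head,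
    norm_sq_eq_head]
  simp only [rotFun, hd0_sub, hd1_sub, hd2_sub, hd3_sub, hd0_setHead, hd1_setHead, hd2_setHead,
    hd3_setHead, PiLp.sub_apply, tail_setHead, sub_self, sub_zero]
  simp only [ne_eq, OfNat.ofNat_ne_zero, not_false_eq_true, zero_pow, Finset.sum_const_zero,
    add_zero]
  nlinarith [mul_nonneg (sq_nonneg (b - b'))
    (show 0 ≤ hd0 x ^ 2 + hd1 x ^ 2 + hd2 x ^ 2 + hd3 x ^ 2 by positivity)]

lemma largeOrbits_rotations : LargeOrbits (rotations k) swap := by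
  intro L
  refine ⟨2 * L, fun x => ⟨setHead x 0 0 0 0, ?_, ?_, fun r hr => ?_⟩⟩
  · rintro g ⟨a, b, hab, rfl⟩
    apply ext_head <;> simp [rotFun]
  · apply ext_head <;> simp [swapFun]
  by_cases hx : ‖x - setHead x 0 0 0 0‖ ≤ 2 * L * r
  · exact Or.inl hx
  right
  push Not at hx
  have hj : ∀ j : Fin L, ((j : ℝ) / L) ^ 2 + √(1 - ((j : ℝ) / L) ^ 2) ^ 2 = 1 := fun j => by
    have hL : (0 : ℝ) < L := by exact_mod_cast j.pos
    have h1 : (j : ℝ) / L ≤ 1 := by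
      rw [div_le_one hL]; exact_mod_cast j.is_lt.le
    rw [sq_sqrt]
    · ring
    · have : ((j : ℝ) / L) ^ 2 ≤ 1 := pow_le_one₀ (by positivity) h1
      linarith
  refine ⟨fun j => rot _ _ (hj j), fun j => ⟨_, _, hj j, rfl⟩, fun i j hij => ?_⟩
  have hL : (0 : ℝ) < L := by exact_mod_cast i.pos
  have hsep : 1 / (L : ℝ) ≤ |(i : ℝ) / L - (j : ℝ) / L| := by
    rw [← sub_div, abs_div, abs_of_pos hL]
    gcongr
    have : (1 : ℤ) ≤ |((i : ℕ) : ℤ) - ((j : ℕ) : ℤ)| := by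
      rw [← Int.zero_add 1, Int.add_one_le_iff, abs_pos, sub_ne_zero]
      exact_mod_cast fun h' => hij (Fin.ext h')
    exact_mod_cast this
  rw [dist_eq_norm, rot_apply, rot_apply]
  refine le_trans ?_ (norm_rot_sub_rot _ _ _ _ x)
  calc 2 * r = 1 / (L : ℝ) * (2 * L * r) := by field_simp
    _ ≤ _ := by gcongr

/-- A test function invariant under `rotations` and odd under `swap`. -/
def seed (k : ℕ) (x : Euc (k + 4)) : ℝ :=
  (hd0 x ^ 2 + hd1 x ^ 2 - hd2 x ^ 2 - hd3 x ^ 2) * Real.smoothTransition (1 - ‖x‖ ^ 2)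

lemma contDiff_seed : ContDiff ℝ 1 (seed k) := by
  unfold seed hd0 hd1 hd2 hd3
  have h1 : ContDiff ℝ 1 fun x : Euc (k + 4) => Real.smoothTransition (1 - ‖x‖ ^ 2) :=
    Real.smoothTransition.contDiff.comp (contDiff_const.sub (contDiff_norm_sq ℝ))
  fun_prop

lemma hasCompactSupport_seed : HasCompactSupport (seed k) := by
  refine HasCompactSupport.of_support_subset_isCompact (isCompact_closedBall 0 1) fun x hx => ?_
  by_contra h1
  rw [mem_closedBall_zero_iff, not_le] at h1
  refine hx ?_
  rw [seed, Real.smoothTransition.zero_of_nonpos (by nlinarith), mul_zero]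

lemma equivariant_seed (hs0 : 0 < s) (hs1 : s < 1) (h : Subcritical (k + 4) s) :
    Equivariant (k + 4) s (rotations k) swap (seed k) where
  hs := hs_of_contDiff (by omega) hs0 hs1 h contDiff_seed hasCompactSupport_seed
  inv := by
    rintro g ⟨a, b, hab, rfl⟩
    refine ae_of_all _ fun x => ?_
    simp only [Function.comp_apply, seed, LinearIsometryEquiv.norm_map]
    congr 1
    simp only [rot_apply, rotFun, hd0_setHead, hd1_setHead, hd2_setHead, hd3_setHead]
    linear_combination (hd0 x ^ 2 + hd1 x ^ 2 - hd2 x ^ 2 - hd3 x ^ 2) * hab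
  anti := by
    refine ae_of_all _ fun x => ?_
    simp only [Function.comp_apply, seed, LinearIsometryEquiv.norm_map, Pi.neg_apply]
    rw [← neg_mul]
    congr 1
    simp only [swap_apply, swapFun, hd0_setHead, hd1_setHead, hd2_setHead, hd3_setHead]
    ring

lemma critInt_seed_pos (hs0 : 0 < s) (hs1 : s < 1) (h : Subcritical (k + 4) s) :
    0 < critInt (k + 4) s (seed k) := by
  refine lt_of_le_of_ne (critInt_nonneg _) fun h0 => ?_
  have hz := ae_eq_zero_of_critInt_eq_zero h (equivariant_seed hs0 hs1 h).hs h0.symm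
  have hz' : seed k = 0 :=
    (contDiff_seed.continuous.ae_eq_iff_eq volume continuous_zero).1 hz
  have h1 := congrFun hz' (setHead 0 (1 / 2) 0 0 0)
  have h2 : ‖(setHead 0 (1 / 2) 0 0 0 : Euc (k + 4))‖ ^ 2 = 1 / 4 := by
    rw [norm_sq_eq_head]; simp; norm_num
  have h3 := Real.smoothTransition.pos_of_pos (show (0 : ℝ) < 1 - 1 / 4 by norm_num)
  simp only [seed, h2, hd0_setHead, hd1_setHead, hd2_setHead, hd3_setHead, Pi.zero_apply] at h1
  nlinarith

end

section

variable {N : ℕ} {s : ℝ}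

section
variable {G : Set (Euc N ≃ₗᵢ[ℝ] Euc N)} {σ : Euc N ≃ₗᵢ[ℝ] Euc N} {u : Euc N → ℝ}

lemma volume_pos_ne_zero_of_anti (hanti : u ∘ σ =ᵐ[volume] -u) (h0 : ¬ u =ᵐ[volume] 0) :
    0 < volume {x | 0 < u x} := by
  refine pos_iff_ne_zero.2 fun hz => h0 ?_
  have h1 : ∀ᵐ x, u x ≤ 0 := by
    rw [ae_iff]; simpa only [not_le] using hz
  have h2 : ∀ᵐ x, u (σ x) ≤ 0 := σ.measurePreserving.quasiMeasurePreserving.ae h1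
  filter_upwards [h1, h2, hanti] with x h3 h4 h5
  simp only [Function.comp_apply, Pi.neg_apply, Pi.zero_apply] at *
  linarith

lemma not_radial_of_anti (hanti : u ∘ σ =ᵐ[volume] -u) (h0 : ¬ u =ᵐ[volume] 0) :
    ¬ ∃ f : ℝ → ℝ, ∀ᵐ x, u x = f ‖x‖ := by
  rintro ⟨f, hf⟩
  refine h0 ?_
  have h2 : ∀ᵐ x, u (σ x) = f ‖σ x‖ := σ.measurePreserving.quasiMeasurePreserving.ae hf
  filter_upwards [hf, h2, hanti] with x h3 h4 h5
  simp only [Function.comp_apply, Pi.neg_apply, Pi.zero_apply, LinearIsometryEquiv.norm_map] at *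
  linarith

end

lemma setIntegral_ball_dil (h : Subcritical N s) (u : Euc N → ℝ) {r : ℝ} (hr : 0 < r) (R : ℝ) :
    ∫ x in Metric.ball 0 R, |dil s 0 r u x| ^ twoStar N s =
      ∫ x in Metric.ball 0 (r * R), |u x| ^ twoStar N s := by
  rw [← integral_indicator measurableSet_ball, ← integral_indicator measurableSet_ball]
  have h1 : ∀ x, (Metric.ball 0 R).indicator (fun x => |dil s 0 r u x| ^ twoStar N s) x =
      r ^ (N : ℝ) * ((Metric.ball 0 (r * R)).indicator fun x => |u x| ^ twoStar N s) (0 + r • x) :=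
    fun x => by
      have : (0 : Euc N) + r • x ∈ Metric.ball 0 (r * R) ↔ x ∈ Metric.ball 0 R := by
        rw [mem_ball_zero_iff, mem_ball_zero_iff, zero_add, norm_smul, norm_of_nonneg hr.le,
          mul_lt_mul_iff_right₀ hr]
      by_cases hx : x ∈ Metric.ball 0 R
      · rw [Set.indicator_of_mem hx, Set.indicator_of_mem (this.2 hx), dil_crit_density h hr]
      · rw [Set.indicator_of_notMem hx, Set.indicator_of_notMem (fun h' => hx (this.1 h')),
          mul_zero]
  rw [integral_congr_ae (ae_of_all _ h1), integral_const_mul,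
    integral_comp_affine volume _ 0 hr, finrank_euc, ← mul_assoc,
    mul_inv_cancel₀ (rpow_pos_of_pos hr _).ne', one_mul]

/-- Different dilations of a nonzero function are different. -/
lemma dil_injective (h : Subcritical N s) {u : Euc N → ℝ} (hu : Hs N s u) {r t : ℝ} (hr : 0 < r)
    (hrt : r < t) (heq : dil s 0 r u =ᵐ[volume] dil s 0 t u) : u =ᵐ[volume] 0 := by
  have hp := h.twoStar_pos
  have ht := hr.trans hrt
  set ν := t / r
  have hν : 1 < ν := (one_lt_div hr).2 hrt
  have hF : ∀ R, ∫ x in Metric.ball 0 (r * R), |u x| ^ twoStar N s =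
      ∫ x in Metric.ball 0 (t * R), |u x| ^ twoStar N s := fun R => by
    rw [← setIntegral_ball_dil h u hr, ← setIntegral_ball_dil h u ht]
    refine integral_congr_ae (ae_restrict_of_ae ?_)
    filter_upwards [heq] with x hx
    rw [hx]
  have hann : ∀ j : ℤ, ∀ᵐ x : Euc N, x ∈ Metric.ball 0 (ν ^ (j + 1)) \ Metric.ball 0 (ν ^ j) →
      u x = 0 := fun j => by
    have hsub : Metric.ball (0 : Euc N) (ν ^ j) ⊆ Metric.ball 0 (ν ^ (j + 1)) :=
      Metric.ball_subset_ball (zpow_le_zpow_right₀ hν.le (by omega))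
    have h1 := hF (ν ^ j / r)
    have e1 : r * (ν ^ j / r) = ν ^ j := by field_simp
    have e2 : t * (ν ^ j / r) = ν ^ (j + 1) := by
      rw [zpow_add_one₀ (by positivity)]; simp only [ν]; ring
    rw [e1, e2] at h1
    have hm : MeasurableSet (Metric.ball (0 : Euc N) (ν ^ (j + 1)) \ Metric.ball 0 (ν ^ j)) :=
      measurableSet_ball.diff measurableSet_ball
    have h2 := setIntegral_sdiff (f := fun x => |u x| ^ twoStar N s) (μ := volume) measurableSet_ball
      hu.lp.integrableOn hsub
    rw [h1, sub_self] at h2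
    have h3 := (setIntegral_eq_zero_iff_of_nonneg_ae
      (ae_of_all _ fun x => by positivity) hu.lp.integrableOn).1 h2
    filter_upwards [(ae_restrict_iff' hm).1 h3] with x hx hxm
    simpa using (rpow_eq_zero (abs_nonneg _) hp.ne').1 (hx hxm)
  have hN : 0 < N := by exact_mod_cast h.dim_pos
  have : Nonempty (Fin N) := ⟨⟨0, hN⟩⟩
  have hne : ∀ᵐ x : Euc N, x ≠ 0 := by simp [ae_iff]
  filter_upwards [ae_all_iff.2 hann, hne] with x hx hx0
  obtain ⟨j, hj⟩ := exists_mem_Ico_zpow (norm_pos_iff.2 hx0) hν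
  exact hx j ⟨mem_ball_zero_iff.2 hj.2, fun h' => (mem_ball_zero_iff.1 h').not_ge hj.1⟩

end

end FracSobolev

/-- for `N = 4n + m`, `n ≥ 1`, `m ∈ {0,1,2,3}` and `0 < s < 1`, the fractional
critical Schrödinger equation has at least `n` pairwise distinct, sign-changing, non-radial
weak solutions in `Ḣ^s(ℝ^N)`. -/
theorem statement0 (n m N : ℕ) (hn : 1 ≤ n) (hm : m ≤ 3) (hNnm : N = 4 * n + m)
    (s : ℝ) (hs0 : 0 < s) (hs1 : s < 1) :
    ∃ u : Fin n → Euc N → ℝ,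
      (∀ i j : Fin n, i ≠ j → ¬ (∀ᵐ x : Euc N, u i x = u j x)) ∧
      ∀ i : Fin n,
        MemHs N s Set.univ (u i) ∧
        (∀ v : Euc N → ℝ, MemHs N s Set.univ v → pairing N s Set.univ (u i) v = 0) ∧
        0 < volume {x : Euc N | 0 < u i x} ∧
        0 < volume {x : Euc N | u i x < 0} ∧
        ¬ ∃ f : ℝ → ℝ, ∀ᵐ x : Euc N, u i x = f ‖x‖ := by
  obtain ⟨k, rfl⟩ : ∃ k, N = k + 4 := ⟨N - 4, by omega⟩
  have h : FracSobolev.Subcritical (k + 4) s := ⟨hs0, by push_cast; linarith [k.cast_nonneg (α := ℝ)]⟩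
  obtain ⟨w, hw, hwpos, hsol⟩ := FracSobolev.exists_equivariant_solution h
    FracSobolev.largeOrbits_rotations
    ⟨_, FracSobolev.equivariant_seed hs0 hs1 h, FracSobolev.critInt_seed_pos hs0 hs1 h⟩
  have hpos : ∀ i : Fin n, (0 : ℝ) < i + 1 := fun i => by positivity
  have hne0 : ∀ v : Euc (k + 4) → ℝ, 0 < FracSobolev.critInt (k + 4) s v → ¬ v =ᵐ[volume] 0 := fun v hv hv0 => by
    rw [FracSobolev.critInt_congr hv0] at hv
    simp [FracSobolev.critInt, Real.zero_rpow h.twoStar_pos.ne'] at hv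
  refine ⟨fun i => FracSobolev.dil s 0 (i + 1) w, fun i j hij heq => ?_, fun i => ?_⟩
  · replace heq : FracSobolev.dil s 0 ((i : ℝ) + 1) w =ᵐ[volume] FracSobolev.dil s 0 ((j : ℝ) + 1) w := heq
    rcases lt_or_gt_of_ne hij with hlt | hlt
    · exact hne0 w hwpos (FracSobolev.dil_injective h hw.hs (hpos i) (by simpa using hlt) heq)
    · exact hne0 w hwpos (FracSobolev.dil_injective h hw.hs (hpos j) (by simpa using hlt) heq.symm)
  · have hd := hw.dil h (a := 0) (fun g _ => map_zero g) (map_zero _) (hpos i)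
    have hd0 := hne0 _ (hwpos.trans_eq (FracSobolev.critInt_dil (a := 0) h (hpos i) w).symm)
    refine ⟨hd.hs, fun v hv => ?_, FracSobolev.volume_pos_ne_zero_of_anti hd.anti hd0, ?_,
      FracSobolev.not_radial_of_anti hd.anti hd0⟩
    · have hv' := hv.dil h 0 (inv_pos.2 (hpos i))
      rw [FracSobolev.pairing_eq, ← FracSobolev.dil_dil_inv (s := s) (hpos i) v,
        FracSobolev.gagInner_dil (hpos i), FracSobolev.critPair_dil h (hpos i), hsol _ hv', sub_self]
    · have hneg := (hd.smul h (-1))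
      have := FracSobolev.volume_pos_ne_zero_of_anti hneg.anti fun hz => hd0 (by
        filter_upwards [hz] with x hx; simpa using hx)
      simpa using this

end
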